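/- Three-dimensional interpolation estimate (Case 2 of the third Duhamel term): fix 8/3 ≤ r < 4. For any t > 0, any A > 0, any measurable interval I ⊆ [A, t/2], and any measurable u : I × ℝ³ → ℂ, one has ‖ ∫_I e^{i(t−s)Δ} (|u|^{4/3}u)(s) ds ‖_{L^r_x(ℝ³)} ≤ C t^{−3(1/2−1/r)} A^{−(4−r)/(2r)} ‖u‖_{L^∞_s L²_x(I×ℝ³)}^{2(3r−8)/(3(r−2))} ( sup_{s ∈ I} s^{3(1/2−1/r)} ‖u(s)‖_{L^r_x(ℝ³)} )^{(r+2)/(3(r−2))}, with C depending only on r. -/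

import Mathlib

open MeasureTheory Set
open scoped ENNReal Real

noncomputable section

/-- The free Schrödinger propagator `e^{itΔ}` acting on functions on a `d`-dimensional space:
for `t ≠ 0`, `(e^{itΔ}f)(x) = (4πit)^{-d/2} ∫ e^{i|x-y|²/(4t)} f(y) dy`, and `e^{i0Δ}f = f`. -/
def schrod {E : Type*} [NormedAddCommGroup E] [MeasureSpace E] (d : ℕ) (t : ℝ) (f : E → ℂ) :
    E → ℂ :=
  if t = 0 then f
  else fun x =>
    (4 * (Real.pi : ℂ) * Complex.I * (t : ℂ)) ^ (-(d : ℂ) / 2) *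
      ∫ y, Complex.exp (Complex.I * ((‖x - y‖ ^ 2 : ℝ) : ℂ) / (4 * (t : ℂ))) * f y

/-- Mixed Lebesgue norm `‖u‖_{L^p_t L^q_x (I × space)}`. -/
def mixedNorm {α : Type*} [MeasurableSpace α] (ν : Measure α) (I : Set ℝ) (p q : ℝ≥0∞)
    (u : ℝ → α → ℂ) : ℝ≥0∞ :=
  if p = ∞ then essSup (fun t => eLpNorm (u t) q ν) (volume.restrict I)
  else (∫⁻ t in I, eLpNorm (u t) q ν ^ p.toReal) ^ (1 / p.toReal)

/-- Lorentz quasinorm `p^{1/q} ‖ λ · ν({g > λ})^{1/p} ‖_{L^q((0,∞), dλ/λ)}`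
for an `ℝ≥0∞`-valued function `g`. -/
def lorentzNorm {α : Type*} [MeasurableSpace α] (ν : Measure α) (p q : ℝ≥0∞)
    (g : α → ℝ≥0∞) : ℝ≥0∞ :=
  if q = ∞ then
    ⨆ l ∈ Set.Ioi (0 : ℝ), ENNReal.ofReal l * ν {x | ENNReal.ofReal l < g x} ^ p⁻¹.toReal
  else
    (p * ∫⁻ l in Set.Ioi (0 : ℝ),
        (ENNReal.ofReal l * ν {x | ENNReal.ofReal l < g x} ^ p⁻¹.toReal) ^ q.toReal /
          ENNReal.ofReal l) ^ q⁻¹.toReal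

/-- Lorentz quasinorm `‖f‖_{L^{p,q}}` of a scalar function. -/
def lorentzNormC {α : Type*} [MeasurableSpace α] (ν : Measure α) (p q : ℝ≥0∞)
    (f : α → ℂ) : ℝ≥0∞ :=
  lorentzNorm ν p q fun x => (‖f x‖₊ : ℝ≥0∞)

/-- Lorentz-in-time mixed norm `‖u‖_{L^{p,q}_t L^r_x (I × space)}`. -/
def lorentzMixedNorm {α : Type*} [MeasurableSpace α] (ν : Measure α) (I : Set ℝ)
    (p q r : ℝ≥0∞) (u : ℝ → α → ℂ) : ℝ≥0∞ :=
  lorentzNorm (volume.restrict I) p q fun t => eLpNorm (u t) r ν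

/-- The nonlinearity `|f|^a f`. -/
def nonlin {E : Type*} (a : ℝ) (f : E → ℂ) : E → ℂ := fun x => ((‖f x‖ ^ a : ℝ) : ℂ) * f x

/-! By duality in time, bounding the Duhamel integral in `L^r_x` by the `L^{r'}_s L^{q'}_x` norm of
the forcing, `q = dr/(d-2)`, amounts to the homogeneous estimate `L^{r'} → L^r_t L^q_x` for the free
evolution at times bounded away from zero. Real interpolation yields it from the dispersive bound
`L^1 → L^∞` and an endpoint Strichartz estimate `L^2 → L^2_t L^{2d/(d-2),∞}_x`. For the latter,
`TT*` is tested on normalised atoms of the level sets of the evolution: each Gram entry is bounded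
by the dispersive and by the energy estimate, and the smaller of the two is integrable in time.
Finally, Hölder's inequality interpolates the `L^{q'}` norm of `|u|^{4/d}u` between the `L^2` and
`L^r` norms of `u`, which leaves a power of `s` whose `r'`-th power is integrable on `[A, ∞)`.
-/

section Kernel

variable {V : Type*} [NormedAddCommGroup V]

/-- The convolution kernel of the free propagator, `e^{iτΔ} f (x) = ∫ schrodKernel d τ x y * f y`
for `τ ≠ 0`. -/
def schrodKernel (d : ℕ) (τ : ℝ) (x y : V) : ℂ :=
  (4 * (Real.pi : ℂ) * Complex.I * (τ : ℂ)) ^ (-(d : ℂ) / 2) *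
    Complex.exp (Complex.I * ((‖x - y‖ ^ 2 : ℝ) : ℂ) / (4 * (τ : ℂ)))

lemma schrodKernel_comm (d : ℕ) (τ : ℝ) (x y : V) :
    schrodKernel d τ x y = schrodKernel d τ y x := by
  rw [schrodKernel, schrodKernel, norm_sub_rev]

lemma norm_schrodKernel_coeff (d : ℕ) {τ : ℝ} (hτ : τ ≠ 0) :
    ‖(4 * (Real.pi : ℂ) * Complex.I * (τ : ℂ)) ^ (-(d : ℂ) / 2)‖ =
      (4 * π * |τ|) ^ (-(d : ℝ) / 2) := by
  have hz : 4 * (Real.pi : ℂ) * Complex.I * (τ : ℂ) ≠ 0 := by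
    simp [Real.pi_ne_zero, hτ]
  have hexp : -(d : ℂ) / 2 = ((-(d : ℝ) / 2 : ℝ) : ℂ) := by push_cast; ring
  rw [Complex.norm_cpow_of_ne_zero hz, hexp, Complex.ofReal_re, Complex.ofReal_im]
  simp [abs_of_pos Real.pi_pos]

lemma norm_schrodKernel (d : ℕ) {τ : ℝ} (hτ : τ ≠ 0) (x y : V) :
    ‖schrodKernel d τ x y‖ = (4 * π * |τ|) ^ (-(d : ℝ) / 2) := by
  have hphase : Complex.I * ((‖x - y‖ ^ 2 : ℝ) : ℂ) / (4 * (τ : ℂ)) =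
      ((‖x - y‖ ^ 2 / (4 * τ) : ℝ) : ℂ) * Complex.I := by push_cast; ring
  rw [schrodKernel, norm_mul, norm_schrodKernel_coeff d hτ, hphase,
    Complex.norm_exp_ofReal_mul_I, mul_one]

lemma norm_schrodKernel_le (d : ℕ) {δ τ : ℝ} (hδ : 0 < δ) (hτ : δ ≤ |τ|) (x y : V) :
    ‖schrodKernel d τ x y‖ ≤ (4 * π * δ) ^ (-(d : ℝ) / 2) := by
  rw [norm_schrodKernel d (abs_pos.mp (hδ.trans_le hτ))]
  refine Real.rpow_le_rpow_of_nonpos (by positivity) (by gcongr) ?_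
  have := d.cast_nonneg (α := ℝ)
  linarith

lemma schrod_zero [MeasureSpace V] (d : ℕ) (f : V → ℂ) : schrod d 0 f = f := if_pos rfl

lemma schrod_apply [MeasureSpace V] (d : ℕ) {τ : ℝ} (hτ : τ ≠ 0) (f : V → ℂ) (x : V) :
    schrod d τ f x = ∫ y, schrodKernel d τ x y * f y := by
  rw [schrod, if_neg hτ, ← integral_const_mul]
  simp only [schrodKernel, mul_assoc]

lemma enorm_schrod_le [MeasureSpace V] (d : ℕ) {δ τ : ℝ} (hδ : 0 < δ) (hτ : δ ≤ |τ|)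
    (f : V → ℂ) (x : V) :
    ‖schrod d τ f x‖ₑ ≤ ENNReal.ofReal ((4 * π * δ) ^ (-(d : ℝ) / 2)) * ∫⁻ y, ‖f y‖ₑ := by
  rw [schrod_apply d (abs_pos.mp (hδ.trans_le hτ)),
    ← lintegral_const_mul' _ _ ENNReal.ofReal_ne_top]
  refine (enorm_integral_le_lintegral_enorm _).trans (lintegral_mono fun y ↦ ?_)
  rw [enorm_mul, ← ofReal_norm (schrodKernel d τ x y)]
  gcongr
  exact norm_schrodKernel_le d hδ hτ x y

variable [MeasurableSpace V] [BorelSpace V] [SecondCountableTopology V]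

@[fun_prop]
lemma measurable_schrodKernel {α : Type*} [MeasurableSpace α] (d : ℕ) {τ : α → ℝ} {x y : α → V}
    (hτ : Measurable τ) (hx : Measurable x) (hy : Measurable y) :
    Measurable fun a ↦ schrodKernel d (τ a) (x a) (y a) := by
  unfold schrodKernel
  fun_prop

end Kernel

section KernelInner
variable {V : Type*} [NormedAddCommGroup V] [InnerProductSpace ℝ V] [FiniteDimensional ℝ V]
  [MeasurableSpace V] [BorelSpace V]

lemma measurable_schrod {α : Type*} [MeasurableSpace α] (d : ℕ) {τ : α → ℝ} {φ : α → V → ℂ}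
    {x : α → V} (hτ : Measurable τ) (hφ : Measurable (Function.uncurry φ)) (hx : Measurable x) :
    Measurable fun a ↦ schrod d (τ a) (φ a) (x a) := by
  have hsplit : (fun a ↦ schrod d (τ a) (φ a) (x a)) = fun a ↦
      if τ a = 0 then φ a (x a) else ∫ y, schrodKernel d (τ a) (x a) y * φ a y := by
    ext a
    split_ifs with h
    · rw [h, schrod_zero]
    · exact schrod_apply d h _ _
  rw [hsplit]
  refine Measurable.ite (hτ (measurableSet_singleton 0)) (hφ.comp (measurable_id.prodMk hx)) ?_
  refine (StronglyMeasurable.integral_prod_right (Measurable.stronglyMeasurable ?_)).measurable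
  exact (measurable_schrodKernel d (hτ.comp measurable_fst) (hx.comp measurable_fst)
    measurable_snd).mul hφ

lemma measurable_schrod_const (d : ℕ) (τ : ℝ) {f : V → ℂ} (hf : Measurable f) :
    Measurable (schrod d τ f) :=
  measurable_schrod d measurable_const (φ := fun _ ↦ f) (hf.comp measurable_snd) measurable_id

end KernelInner

section Damping

variable {V : Type*} [NormedAddCommGroup V] [InnerProductSpace ℝ V] [FiniteDimensional ℝ V]
  [MeasurableSpace V] [BorelSpace V]

lemma integrable_exp_neg_mul_norm_sq {b : ℝ} (hb : 0 < b) :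
    Integrable fun x : V ↦ Real.exp (-b * ‖x‖ ^ 2) := by
  have hcomplex := (GaussianFourier.integrable_cexp_neg_mul_sq_norm_add (V := V) (b := (b : ℂ))
    (by rwa [Complex.ofReal_re]) 0 0).norm
  refine hcomplex.congr (Filter.Eventually.of_forall fun x ↦ ?_)
  simp only [zero_mul, add_zero, Complex.norm_exp]
  norm_cast

/-- Lebesgue measure with the Gaussian weight `exp (-ε ‖x‖²)`. The kernels of the propagator are
bounded but not square integrable in space; against this finite measure all pairings converge
absolutely, and estimates uniform in `ε` pass to Lebesgue measure. -/
def gaussianDamping (V : Type*) [NormedAddCommGroup V] [InnerProductSpace ℝ V]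
    [FiniteDimensional ℝ V] [MeasurableSpace V] [BorelSpace V] (ε : ℝ) : Measure V :=
  volume.withDensity fun x ↦ ENNReal.ofReal (Real.exp (-ε * ‖x‖ ^ 2))

lemma isFiniteMeasure_gaussianDamping {ε : ℝ} (hε : 0 < ε) :
    IsFiniteMeasure (gaussianDamping V ε) :=
  isFiniteMeasure_withDensity (integrable_exp_neg_mul_norm_sq hε).lintegral_lt_top.ne

lemma integral_gaussianDamping (ε : ℝ) (f : V → ℂ) :
    ∫ x, f x ∂gaussianDamping V ε = ∫ x, f x * (Real.exp (-ε * ‖x‖ ^ 2) : ℂ) := by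
  rw [gaussianDamping, integral_withDensity_eq_integral_toReal_smul (by fun_prop) (by simp)]
  refine integral_congr_ae (Filter.Eventually.of_forall fun x ↦ ?_)
  simp only [ENNReal.toReal_ofReal (Real.exp_pos _).le, Complex.real_smul, mul_comm]

lemma lintegral_le_of_forall_gaussianDamping_le {f : V → ℝ≥0∞} (hf : Measurable f) {C : ℝ≥0∞}
    (h : ∀ ε > 0, ∫⁻ x, f x ∂gaussianDamping V ε ≤ C) : ∫⁻ x, f x ≤ C := by
  have hlim : Filter.Tendsto (fun n : ℕ ↦ -(1 / ((n : ℝ) + 1))) Filter.atTop (nhds 0) := by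
    simpa using (tendsto_one_div_add_atTop_nhds_zero_nat (𝕜 := ℝ)).neg
  calc ∫⁻ x, f x
      = ∫⁻ x, Filter.liminf (fun n : ℕ ↦
          ENNReal.ofReal (Real.exp (-(1 / ((n : ℝ) + 1)) * ‖x‖ ^ 2)) * f x) Filter.atTop := by
        refine lintegral_congr fun x ↦ (Filter.Tendsto.liminf_eq ?_).symm
        have hexp : Filter.Tendsto (fun n : ℕ ↦
            ENNReal.ofReal (Real.exp (-(1 / ((n : ℝ) + 1)) * ‖x‖ ^ 2))) Filter.atTop (nhds 1) := by
          have hmul := hlim.mul_const (‖x‖ ^ 2)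
          rw [zero_mul] at hmul
          simpa using ENNReal.tendsto_ofReal ((Real.continuous_exp.tendsto 0).comp hmul)
        simpa using ENNReal.Tendsto.mul_const hexp (Or.inl one_ne_zero)
    _ ≤ Filter.liminf (fun n : ℕ ↦ ∫⁻ x,
          ENNReal.ofReal (Real.exp (-(1 / ((n : ℝ) + 1)) * ‖x‖ ^ 2)) * f x) Filter.atTop :=
        lintegral_liminf_le fun n ↦ by fun_prop
    _ ≤ C := by
        refine Filter.liminf_le_of_le (by isBoundedDefault) fun b hb ↦ ?_
        obtain ⟨n, hn⟩ := hb.exists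
        refine hn.trans (le_trans (le_of_eq ?_) (h (1 / ((n : ℝ) + 1)) (by positivity)))
        rw [gaussianDamping, lintegral_withDensity_eq_lintegral_mul _ (by fun_prop) hf]
        rfl

end Damping

section Gram

open ComplexConjugate

variable {V : Type*} [NormedAddCommGroup V] [InnerProductSpace ℝ V] [FiniteDimensional ℝ V]
  [MeasurableSpace V] [BorelSpace V] {d : ℕ}

/-- The Gram kernel of the propagators at times `τ` and `τ'`: the (damped) `L²` inner product of
`schrodKernel d τ · y` and `schrodKernel d τ' · y'`. -/
def schrodGram (d : ℕ) (ε τ τ' : ℝ) (y y' : V) : ℂ :=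
  ∫ x, schrodKernel d τ x y * conj (schrodKernel d τ' x y') ∂gaussianDamping V ε

/-- The complex width of the Gaussian in `x` obtained by multiplying the two kernels and the
weight. -/
def gramWidth (ε τ τ' : ℝ) : ℂ := (ε : ℂ) - ((1 / (4 * τ) - 1 / (4 * τ') : ℝ) : ℂ) * Complex.I

lemma gramWidth_re (ε τ τ' : ℝ) : (gramWidth ε τ τ').re = ε := by
  rw [gramWidth, Complex.sub_re, Complex.re_ofReal_mul]; simp

lemma gramWidth_im (ε τ τ' : ℝ) : (gramWidth ε τ τ').im = -(1 / (4 * τ) - 1 / (4 * τ')) := by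
  rw [gramWidth, Complex.sub_im, Complex.im_ofReal_mul]; simp

open Complex in
/-- Completing the square. -/
lemma schrodGram_eq (hV : Module.finrank ℝ V = d) {ε τ τ' : ℝ} (hε : 0 < ε) (hτ : τ ≠ 0)
    (hτ' : τ' ≠ 0) (y y' : V) :
    schrodGram d ε τ τ' y y' =
      (4 * (π : ℂ) * I * (τ : ℂ)) ^ (-(d : ℂ) / 2) *
      conj ((4 * (π : ℂ) * I * (τ' : ℂ)) ^ (-(d : ℂ) / 2)) *
      cexp (((‖y‖ ^ 2 / (4 * τ) - ‖y'‖ ^ 2 / (4 * τ') : ℝ) : ℂ) * I) *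
      ((π / gramWidth ε τ τ') ^ (d / 2 : ℂ) *
        cexp (-(‖(1 / (2 * τ')) • y' - (1 / (2 * τ)) • y‖ ^ 2 : ℝ) /
          (4 * gramWidth ε τ τ'))) := by
  have hgauss := GaussianFourier.integral_cexp_neg_mul_sq_norm_add
    (b := gramWidth ε τ τ') (by rwa [gramWidth_re]) I ((1 / (2 * τ')) • y' - (1 / (2 * τ)) • y)
  rw [I_sq, neg_one_mul, ← ofReal_pow, hV] at hgauss
  rw [schrodGram, integral_gaussianDamping, ← hgauss, ← integral_const_mul]
  refine integral_congr_ae (Filter.Eventually.of_forall fun x ↦ ?_)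
  have hregroup (a b c e g : ℂ) : a * b * (c * e) * g = a * c * (b * e * g) := by ring
  simp only [schrodKernel, map_mul (starRingEnd ℂ), ← Complex.exp_conj]
  rw [hregroup, mul_assoc (_ * conj _)]
  congr 1
  rw [ofReal_exp, ← Complex.exp_add, ← Complex.exp_add, ← Complex.exp_add, norm_sub_sq_real,
    norm_sub_sq_real]
  simp only [map_div₀, map_mul, conj_I, conj_ofReal, map_ofNat, real_inner_comm x, inner_sub_right,
    inner_smul_right, gramWidth]
  have hτ_ne : (τ : ℂ) ≠ 0 := mod_cast hτ
  have hτ_ne' : (τ' : ℂ) ≠ 0 := mod_cast hτ'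
  congr 1
  push_cast
  field_simp
  ring

lemma norm_cpow_natCast_div_two (d : ℕ) {b : ℂ} (hb : b ≠ 0) :
    ‖((π : ℂ) / b) ^ (d / 2 : ℂ)‖ = (π / ‖b‖) ^ ((d : ℝ) / 2) := by
  have hexp : (d / 2 : ℂ) = (((d : ℝ) / 2 : ℝ) : ℂ) := by push_cast; rfl
  rw [Complex.norm_cpow_of_ne_zero (div_ne_zero (by simp [Real.pi_ne_zero]) hb), hexp,
    Complex.ofReal_re, Complex.ofReal_im]
  simp [abs_of_pos Real.pi_pos]

lemma norm_schrodGram_eq (hV : Module.finrank ℝ V = d) {ε τ τ' : ℝ} (hε : 0 < ε) (hτ : τ ≠ 0)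
    (hτ' : τ' ≠ 0) (y y' : V) :
    ‖schrodGram d ε τ τ' y y'‖ =
      (4 * π * |τ|) ^ (-(d : ℝ) / 2) * (4 * π * |τ'|) ^ (-(d : ℝ) / 2) *
        ((π / ‖gramWidth ε τ τ'‖) ^ ((d : ℝ) / 2) *
          ‖Complex.exp (-(‖(1 / (2 * τ')) • y' - (1 / (2 * τ)) • y‖ ^ 2 : ℝ) /
            (4 * gramWidth ε τ τ'))‖) := by
  have hb : gramWidth ε τ τ' ≠ 0 := fun h ↦ hε.ne' (by rw [← gramWidth_re ε τ τ', h]; rfl)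
  rw [schrodGram_eq hV hε hτ hτ', norm_mul, norm_mul, norm_mul, norm_mul, RCLike.norm_conj,
    norm_schrodKernel_coeff d hτ, norm_schrodKernel_coeff d hτ', Complex.norm_exp_ofReal_mul_I,
    mul_one, norm_cpow_natCast_div_two d hb]

lemma norm_schrodGram_le (hV : Module.finrank ℝ V = d) {ε τ τ' : ℝ} (hε : 0 < ε) (hτ : τ ≠ 0)
    (hτ' : τ' ≠ 0) (hne : τ ≠ τ') (y y' : V) :
    ‖schrodGram d ε τ τ' y y'‖ ≤ (4 * π * |τ - τ'|) ^ (-(d : ℝ) / 2) := by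
  have hwidth : |τ - τ'| / (4 * |τ| * |τ'|) ≤ ‖gramWidth ε τ τ'‖ := by
    refine le_trans (le_of_eq ?_) (Complex.abs_im_le_norm _)
    have hfrac : -(1 / (4 * τ) - 1 / (4 * τ')) = (τ - τ') / (4 * τ * τ') := by field_simp; ring
    rw [gramWidth_im, hfrac, abs_div, abs_mul, abs_mul, abs_of_pos (by norm_num : (0 : ℝ) < 4)]
  have hdecay : ‖Complex.exp (-(‖(1 / (2 * τ')) • y' - (1 / (2 * τ)) • y‖ ^ 2 : ℝ) /
      (4 * gramWidth ε τ τ'))‖ ≤ 1 := by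
    rw [Complex.norm_exp, Real.exp_le_one_iff, neg_div, Complex.neg_re, Complex.div_re]
    simp only [Complex.ofReal_re, Complex.ofReal_im, zero_mul, zero_div, add_zero,
      Left.neg_nonpos_iff]
    have hre : (4 * gramWidth ε τ τ').re = 4 * ε := by simp [gramWidth_re]
    have hnonneg := Complex.normSq_nonneg (4 * gramWidth ε τ τ')
    rw [hre]
    positivity
  rw [norm_schrodGram_eq hV hε hτ hτ']
  calc _ ≤ (4 * π * |τ|) ^ (-(d : ℝ) / 2) * (4 * π * |τ'|) ^ (-(d : ℝ) / 2) *
        ((π / (|τ - τ'| / (4 * |τ| * |τ'|))) ^ ((d : ℝ) / 2) * 1) := by gcongr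
    _ = (4 * π * |τ - τ'|) ^ (-(d : ℝ) / 2) := by
        rw [mul_one, neg_div, Real.rpow_neg (by positivity), Real.rpow_neg (by positivity),
          Real.rpow_neg (by positivity), ← Real.inv_rpow (by positivity),
          ← Real.inv_rpow (by positivity), ← Real.inv_rpow (by positivity),
          ← Real.mul_rpow (by positivity) (by positivity),
          ← Real.mul_rpow (by positivity) (by positivity)]
        congr 1
        field_simp

lemma norm_schrodGram_self (hV : Module.finrank ℝ V = d) {ε τ : ℝ} (hε : 0 < ε) (hτ : τ ≠ 0)
    (y y' : V) :
    ‖schrodGram d ε τ τ y y'‖ =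
      (4 * π * |τ|) ^ (-(d : ℝ)) * (π / ε) ^ ((d : ℝ) / 2) *
        Real.exp (-(1 / (16 * τ ^ 2 * ε)) * ‖y - y'‖ ^ 2) := by
  have hwidth : gramWidth ε τ τ = (ε : ℂ) := by simp [gramWidth]
  have hre : (-(‖(1 / (2 * τ)) • y' - (1 / (2 * τ)) • y‖ ^ 2 : ℝ) / (4 * (ε : ℂ))).re =
      -(1 / (16 * τ ^ 2 * ε)) * ‖y - y'‖ ^ 2 := by
    rw [← smul_sub, norm_smul, norm_sub_rev, ← Complex.ofReal_ofNat, ← Complex.ofReal_mul,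
      ← Complex.ofReal_neg, ← Complex.ofReal_div, Complex.ofReal_re, Real.norm_eq_abs, mul_pow,
      sq_abs]
    field_simp
    ring
  rw [norm_schrodGram_eq hV hε hτ hτ, hwidth, Complex.norm_exp, hre, Complex.norm_real,
    Real.norm_eq_abs, abs_of_pos hε, ← Real.rpow_add (by positivity), add_halves, ← mul_assoc]

lemma lintegral_enorm_schrodGram_self (hV : Module.finrank ℝ V = d) {ε τ : ℝ} (hε : 0 < ε)
    (hτ : τ ≠ 0) (y : V) : ∫⁻ y', ‖schrodGram d ε τ τ y y'‖ₑ = 1 := by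
  have hb : 0 < 1 / (16 * τ ^ 2 * ε) := by positivity
  simp_rw [← ofReal_norm, norm_schrodGram_self hV hε hτ]
  rw [lintegral_sub_left_eq_self (fun z : V ↦ ENNReal.ofReal ((4 * π * |τ|) ^ (-(d : ℝ)) *
      (π / ε) ^ ((d : ℝ) / 2) * Real.exp (-(1 / (16 * τ ^ 2 * ε)) * ‖z‖ ^ 2))) y,
    ← ofReal_integral_eq_lintegral_ofReal ((integrable_exp_neg_mul_norm_sq hb).const_mul _)
      (Filter.Eventually.of_forall fun z ↦ by positivity), integral_const_mul,
    GaussianFourier.integral_rexp_neg_mul_sq_norm hb, hV, ENNReal.ofReal_eq_one, mul_assoc,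
    ← Real.mul_rpow (by positivity) (by positivity)]
  have hsq : π / ε * (π / (1 / (16 * τ ^ 2 * ε))) = (4 * π * |τ|) ^ (2 : ℝ) := by
    rw [Real.rpow_two, mul_pow, sq_abs]; field_simp; ring
  rw [hsq, ← Real.rpow_mul (by positivity), ← Real.rpow_add (by positivity),
    mul_div_cancel₀ _ two_ne_zero, neg_add_cancel, Real.rpow_zero]

end Gram

section Pairing

open ComplexConjugate

variable {α α' β : Type*} [MeasurableSpace α] [MeasurableSpace α'] [MeasurableSpace β]

lemma lintegral_enorm_sq_eq_enorm_integral {μ : Measure β} {f : β → ℂ} (hf : MemLp f 2 μ) :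
    ∫⁻ x, ‖f x‖ₑ ^ 2 ∂μ = ‖∫ x, f x * conj (f x) ∂μ‖ₑ := by
  have hsq (x : β) : f x * conj (f x) = ((‖f x‖ ^ 2 : ℝ) : ℂ) := by
    rw [Complex.mul_conj, Complex.normSq_eq_norm_sq]
  simp_rw [hsq]
  rw [integral_complex_ofReal, ← ofReal_norm, Complex.norm_real, Real.norm_eq_abs,
    abs_of_nonneg (integral_nonneg fun x ↦ by positivity),
    ofReal_integral_eq_lintegral_ofReal (hf.integrable_norm_pow two_ne_zero)
      (Filter.Eventually.of_forall fun x ↦ by positivity)]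
  simp_rw [ENNReal.ofReal_pow (norm_nonneg _), ofReal_norm]

lemma enorm_integral_mul_conj_integral_le {γ : Measure β} [IsFiniteMeasure γ]
    {ν : Measure α} [SFinite ν] {ν' : Measure α'} [SFinite ν']
    {v : α → β → ℂ} (hv : Measurable (Function.uncurry v)) {R : α → ℝ} (hR : Integrable R ν)
    (hvR : ∀ᵐ a ∂ν, ∀ x, ‖v a x‖ ≤ R a)
    {w : α' → β → ℂ} (hw : Measurable (Function.uncurry w)) {R' : α' → ℝ} (hR' : Integrable R' ν')
    (hwR' : ∀ᵐ b ∂ν', ∀ x, ‖w b x‖ ≤ R' b) :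
    ‖∫ x, (∫ a, v a x ∂ν) * conj (∫ b, w b x ∂ν') ∂γ‖ₑ ≤
      ∫⁻ a, ∫⁻ b, ‖∫ x, v a x * conj (w b x) ∂γ‖ₑ ∂ν' ∂ν := by
  have hprod (x : β) : (∫ a, v a x ∂ν) * conj (∫ b, w b x ∂ν') =
      ∫ p : α × α', v p.1 x * conj (w p.2 x) ∂ν.prod ν' := by
    rw [← integral_conj]
    exact (integral_prod_mul (fun a ↦ v a x) fun b ↦ conj (w b x)).symm
  have hmeas : Measurable fun q : β × α × α' ↦ v q.2.1 q.1 * conj (w q.2.2 q.1) := by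
    have hv' : Measurable fun q : β × α × α' ↦ v q.2.1 q.1 :=
      hv.comp (measurable_snd.fst.prodMk measurable_fst)
    have hw' : Measurable fun q : β × α × α' ↦ w q.2.2 q.1 :=
      hw.comp (measurable_snd.snd.prodMk measurable_fst)
    exact hv'.mul (Complex.continuous_conj.measurable.comp hw')
  have hint : Integrable (fun q : β × α × α' ↦ v q.2.1 q.1 * conj (w q.2.2 q.1))
      (γ.prod (ν.prod ν')) := by
    refine ((integrable_const (1 : ℝ) (μ := γ)).mul_prod (hR.mul_prod hR')).mono'
      hmeas.aestronglyMeasurable ?_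
    filter_upwards [Measure.quasiMeasurePreserving_snd.ae
        (Measure.quasiMeasurePreserving_fst.ae hvR),
      Measure.quasiMeasurePreserving_snd.ae (Measure.quasiMeasurePreserving_snd.ae hwR')]
      with q hq hq'
    rw [norm_mul, RCLike.norm_conj, one_mul]
    exact mul_le_mul (hq _) (hq' _) (norm_nonneg _) ((norm_nonneg _).trans (hq q.1))
  simp_rw [hprod]
  rw [integral_integral_swap hint]
  refine (enorm_integral_le_lintegral_enorm _).trans_eq (lintegral_prod _ ?_)
  have hswap : StronglyMeasurable fun q : (α × α') × β ↦ v q.1.1 q.2 * conj (w q.1.2 q.2) :=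
    (hmeas.comp measurable_swap).stronglyMeasurable
  exact hswap.integral_prod_right'.measurable.enorm.aemeasurable

lemma lintegral_enorm_integral_sq_le {γ : Measure β} [IsFiniteMeasure γ] {ν : Measure α}
    [SFinite ν] {v : α → β → ℂ} (hv : Measurable (Function.uncurry v)) {R : α → ℝ}
    (hR : Integrable R ν) (hvR : ∀ᵐ a ∂ν, ∀ x, ‖v a x‖ ≤ R a) :
    ∫⁻ x, ‖∫ a, v a x ∂ν‖ₑ ^ 2 ∂γ ≤
      ∫⁻ a, ∫⁻ b, ‖∫ x, v a x * conj (v b x) ∂γ‖ₑ ∂ν ∂ν := by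
  have hmeas : Measurable fun x ↦ ∫ a, v a x ∂ν := by
    have hswap : StronglyMeasurable fun p : β × α ↦ v p.2 p.1 :=
      (hv.comp measurable_swap).stronglyMeasurable
    exact hswap.integral_prod_right'.measurable
  have hmem : MemLp (fun x ↦ ∫ a, v a x ∂ν) 2 γ := by
    refine MemLp.of_bound hmeas.aestronglyMeasurable (∫ a, R a ∂ν)
      (Filter.Eventually.of_forall fun x ↦ norm_integral_le_of_norm_le hR ?_)
    filter_upwards [hvR] with a ha using ha x
  rw [lintegral_enorm_sq_eq_enorm_integral hmem]
  exact enorm_integral_mul_conj_integral_le hv hR hvR hv hR hvR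

lemma lintegral_lintegral_mul_kernel_le {μ : Measure α} [SFinite μ] {k : α → α → ℝ≥0∞}
    (hk : Measurable (Function.uncurry k)) (hrow : ∀ y, ∫⁻ y', k y y' ∂μ ≤ 1)
    (hcol : ∀ y', ∫⁻ y, k y y' ∂μ ≤ 1) {f : α → ℝ≥0∞} (hf : Measurable f) :
    ∫⁻ y, ∫⁻ y', f y * f y' * k y y' ∂μ ∂μ ≤ ∫⁻ y, f y ^ 2 ∂μ := by
  have hmeas : Measurable fun p : α × α ↦ f p.2 ^ 2 / 2 * k p.1 p.2 :=
    (((hf.comp measurable_snd).pow_const 2).div_const 2).mul hk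
  have hyoung (a b : ℝ≥0∞) : a * b ≤ a ^ 2 / 2 + b ^ 2 / 2 := by
    simpa using ENNReal.young_inequality a b Real.HolderConjugate.two_two
  have hhalf : ∫⁻ y, f y ^ 2 / 2 ∂μ = (∫⁻ y, f y ^ 2 ∂μ) / 2 := by
    simp_rw [div_eq_mul_inv]
    exact lintegral_mul_const _ (by fun_prop)
  calc ∫⁻ y, ∫⁻ y', f y * f y' * k y y' ∂μ ∂μ
      ≤ ∫⁻ y, ∫⁻ y', (f y ^ 2 / 2 * k y y' + f y' ^ 2 / 2 * k y y') ∂μ ∂μ := by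
        gcongr with y y'
        rw [← add_mul]
        gcongr
        exact hyoung _ _
    _ = (∫⁻ y, f y ^ 2 / 2 * ∫⁻ y', k y y' ∂μ ∂μ) +
          ∫⁻ y', f y' ^ 2 / 2 * ∫⁻ y, k y y' ∂μ ∂μ := by
        have hswap : ∫⁻ y', f y' ^ 2 / 2 * ∫⁻ y, k y y' ∂μ ∂μ =
            ∫⁻ y, ∫⁻ y', f y' ^ 2 / 2 * k y y' ∂μ ∂μ := by
          rw [lintegral_lintegral_swap hmeas.aemeasurable]
          exact lintegral_congr fun y' ↦ (lintegral_const_mul _ hk.of_uncurry_right).symm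
        rw [hswap, ← lintegral_add_right _ hmeas.lintegral_prod_right']
        refine lintegral_congr fun y ↦ ?_
        rw [lintegral_add_left (hk.of_uncurry_left.const_mul _),
          lintegral_const_mul _ hk.of_uncurry_left]
    _ ≤ (∫⁻ y, f y ^ 2 / 2 * 1 ∂μ) + ∫⁻ y', f y' ^ 2 / 2 * 1 ∂μ := by
        gcongr with y y'
        · exact hrow y
        · exact hcol y'
    _ = ∫⁻ y, f y ^ 2 ∂μ := by simp_rw [mul_one]; rw [hhalf, ENNReal.add_halves]

end Pairing

section Dispersive

open ComplexConjugate

variable {V : Type*} [NormedAddCommGroup V] [InnerProductSpace ℝ V] [FiniteDimensional ℝ V]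
  [MeasurableSpace V] [BorelSpace V] {d : ℕ} {ε τ τ' : ℝ} {f g : V → ℂ}

lemma measurable_schrodGram (d : ℕ) (ε τ τ' : ℝ) (hε : 0 < ε) :
    Measurable (Function.uncurry (schrodGram (V := V) d ε τ τ')) := by
  have := isFiniteMeasure_gaussianDamping (V := V) hε
  have hmeas : StronglyMeasurable fun q : (V × V) × V ↦
      schrodKernel d τ q.2 q.1.1 * conj (schrodKernel d τ' q.2 q.1.2) := by
    refine Measurable.stronglyMeasurable (Measurable.mul ?_
      (Complex.continuous_conj.measurable.comp ?_)) <;> fun_prop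
  exact hmeas.integral_prod_right'.measurable

lemma schrodGram_self_comm (d : ℕ) (ε τ : ℝ) (y y' : V) :
    ‖schrodGram d ε τ τ y y'‖ₑ = ‖schrodGram d ε τ τ y' y‖ₑ := by
  rw [schrodGram, ← RCLike.enorm_conj, ← integral_conj, schrodGram]
  simp only [map_mul, RingHomCompTriple.comp_apply, RingHom.id_apply, mul_comm]

lemma enorm_integral_schrod_mul_conj_le (hε : 0 < ε) (hτ : τ ≠ 0) (hτ' : τ' ≠ 0)
    (hf : Measurable f) (hfi : Integrable f) (hg : Measurable g) (hgi : Integrable g) :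
    ‖∫ x, schrod d τ f x * conj (schrod d τ' g x) ∂gaussianDamping V ε‖ₑ ≤
      ∫⁻ y, ∫⁻ y', ‖f y‖ₑ * ‖g y'‖ₑ * ‖schrodGram d ε τ τ' y y'‖ₑ := by
  have := isFiniteMeasure_gaussianDamping (V := V) hε
  have hmeas (σ : ℝ) {h : V → ℂ} (hh : Measurable h) :
      Measurable (Function.uncurry fun y x ↦ schrodKernel d σ x y * h y) :=
    (measurable_schrodKernel d measurable_const measurable_snd measurable_fst).mul
      (hh.comp measurable_fst)
  have hbound {σ : ℝ} (hσ : σ ≠ 0) (h : V → ℂ) : ∀ᵐ y : V, ∀ x,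
      ‖schrodKernel d σ x y * h y‖ ≤ (4 * π * |σ|) ^ (-(d : ℝ) / 2) * ‖h y‖ :=
    Filter.Eventually.of_forall fun y x ↦ by rw [norm_mul, norm_schrodKernel d hσ]
  simp_rw [schrod_apply d hτ, schrod_apply d hτ']
  refine (enorm_integral_mul_conj_integral_le (hmeas τ hf) (hfi.norm.const_mul _) (hbound hτ f)
    (hmeas τ' hg) (hgi.norm.const_mul _) (hbound hτ' g)).trans_eq ?_
  refine lintegral_congr fun y ↦ lintegral_congr fun y' ↦ ?_
  rw [schrodGram, ← RCLike.enorm_conj (g y'), ← enorm_mul, ← enorm_mul, ← integral_const_mul]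
  congr 2 with x
  rw [map_mul]
  ring

lemma enorm_integral_schrod_mul_conj_le_dispersive (hV : Module.finrank ℝ V = d) (hε : 0 < ε)
    (hτ : τ ≠ 0) (hτ' : τ' ≠ 0) (hne : τ ≠ τ') (hf : Measurable f) (hfi : Integrable f)
    (hg : Measurable g) (hgi : Integrable g) :
    ‖∫ x, schrod d τ f x * conj (schrod d τ' g x) ∂gaussianDamping V ε‖ₑ ≤
      ENNReal.ofReal ((4 * π * |τ - τ'|) ^ (-(d : ℝ) / 2)) *
        ((∫⁻ y, ‖f y‖ₑ) * ∫⁻ y, ‖g y‖ₑ) := by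
  refine (enorm_integral_schrod_mul_conj_le hε hτ hτ' hf hfi hg hgi).trans ?_
  rw [← lintegral_lintegral_mul hf.enorm.aemeasurable hg.enorm.aemeasurable,
    ← lintegral_const_mul' _ _ ENNReal.ofReal_ne_top]
  refine lintegral_mono fun y ↦ ?_
  rw [← lintegral_const_mul' _ _ ENNReal.ofReal_ne_top]
  refine lintegral_mono fun y' ↦ ?_
  rw [mul_comm, ← ofReal_norm (schrodGram d ε τ τ' y y')]
  gcongr
  exact norm_schrodGram_le hV hε hτ hτ' hne y y'

lemma lintegral_enorm_schrod_sq_gaussianDamping_le (hV : Module.finrank ℝ V = d) (hε : 0 < ε)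
    (hτ : τ ≠ 0) (hf : Measurable f) (hfi : Integrable f) :
    ∫⁻ x, ‖schrod d τ f x‖ₑ ^ 2 ∂gaussianDamping V ε ≤ ∫⁻ y, ‖f y‖ₑ ^ 2 := by
  have := isFiniteMeasure_gaussianDamping (V := V) hε
  have hmem : MemLp (schrod d τ f) 2 (gaussianDamping V ε) := by
    refine MemLp.of_bound (measurable_schrod_const d τ hf).aestronglyMeasurable
      ((4 * π * |τ|) ^ (-(d : ℝ) / 2) * ∫ y, ‖f y‖) (Filter.Eventually.of_forall fun x ↦ ?_)
    rw [schrod_apply d hτ, ← integral_const_mul]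
    refine norm_integral_le_of_norm_le (hfi.norm.const_mul _)
      (Filter.Eventually.of_forall fun y ↦ ?_)
    rw [norm_mul, norm_schrodKernel d hτ]
  rw [lintegral_enorm_sq_eq_enorm_integral hmem]
  refine (enorm_integral_schrod_mul_conj_le hε hτ hτ hf hfi hf hfi).trans ?_
  refine lintegral_lintegral_mul_kernel_le (measurable_schrodGram d ε τ τ hε).enorm
    (fun y ↦ (lintegral_enorm_schrodGram_self hV hε hτ y).le) (fun y' ↦ ?_) hf.enorm
  simp_rw [schrodGram_self_comm d ε τ _ y']
  exact (lintegral_enorm_schrodGram_self hV hε hτ y').le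

lemma lintegral_enorm_schrod_sq_le (hV : Module.finrank ℝ V = d) (hτ : τ ≠ 0)
    (hf : Measurable f) (hfi : Integrable f) :
    ∫⁻ x, ‖schrod d τ f x‖ₑ ^ 2 ≤ ∫⁻ y, ‖f y‖ₑ ^ 2 :=
  lintegral_le_of_forall_gaussianDamping_le
    ((measurable_schrod_const d τ hf).enorm.pow_const 2)
    fun _ hε ↦ lintegral_enorm_schrod_sq_gaussianDamping_le hV hε hτ hf hfi

lemma enorm_integral_schrod_mul_conj_le_energy (hV : Module.finrank ℝ V = d) (hε : 0 < ε)
    (hτ : τ ≠ 0) (hτ' : τ' ≠ 0) (hf : Measurable f) (hfi : Integrable f) (hg : Measurable g)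
    (hgi : Integrable g) :
    ‖∫ x, schrod d τ f x * conj (schrod d τ' g x) ∂gaussianDamping V ε‖ₑ ≤
      (∫⁻ y, ‖f y‖ₑ ^ 2) ^ (1 / 2 : ℝ) * (∫⁻ y, ‖g y‖ₑ ^ 2) ^ (1 / 2 : ℝ) := by
  have hmeas (σ : ℝ) {h : V → ℂ} (hh : Measurable h) :
      AEMeasurable (fun x ↦ ‖schrod d σ h x‖ₑ) (gaussianDamping V ε) :=
    (measurable_schrod_const d σ hh).enorm.aemeasurable
  refine (enorm_integral_le_lintegral_enorm _).trans ?_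
  simp only [enorm_mul, RCLike.enorm_conj]
  refine (ENNReal.lintegral_mul_le_Lp_mul_Lq _ Real.HolderConjugate.two_two (hmeas τ hf)
    (hmeas τ' hg)).trans ?_
  simp only [ENNReal.rpow_ofNat]
  gcongr ?_ ^ (1 / 2 : ℝ) * ?_ ^ (1 / 2 : ℝ)
  · exact lintegral_enorm_schrod_sq_gaussianDamping_le hV hε hτ hf hfi
  · exact lintegral_enorm_schrod_sq_gaussianDamping_le hV hε hτ' hg hgi

end Dispersive

section EndpointKernel

lemma lintegral_Ioc_rpow {p b : ℝ} (hp : -1 < p) (hb : 0 ≤ b) :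
    ∫⁻ x in Ioc 0 b, ENNReal.ofReal (x ^ p) = ENNReal.ofReal (b ^ (p + 1) / (p + 1)) := by
  have hint : IntegrableOn (fun x : ℝ ↦ x ^ p) (Ioc 0 b) :=
    (intervalIntegrable_iff_integrableOn_Ioc_of_le hb).mp
      (intervalIntegral.intervalIntegrable_rpow' hp)
  rw [← ofReal_integral_eq_lintegral_ofReal hint ((ae_restrict_mem measurableSet_Ioc).mono
      fun x hx ↦ Real.rpow_nonneg hx.1.le _),
    ← intervalIntegral.integral_of_le hb, integral_rpow (Or.inl hp),
    Real.zero_rpow (by linarith), sub_zero]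

lemma lintegral_Ioi_rpow {p a : ℝ} (hp : p < -1) (ha : 0 < a) :
    ∫⁻ x in Ioi a, ENNReal.ofReal (x ^ p) = ENNReal.ofReal (a ^ (p + 1) / (-(p + 1))) := by
  rw [← ofReal_integral_eq_lintegral_ofReal (integrableOn_Ioi_rpow_of_lt hp ha)
      ((ae_restrict_mem measurableSet_Ioi).mono fun x hx ↦ Real.rpow_nonneg (ha.trans hx).le _),
    integral_Ioi_rpow_of_lt hp ha, div_neg, neg_div]

lemma lintegral_eq_two_mul_of_even {f : ℝ → ℝ≥0∞} (hf : ∀ σ, f (-σ) = f σ) :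
    ∫⁻ σ, f σ = 2 * ∫⁻ σ in Ioi 0, f σ := by
  have hneg : ∫⁻ σ in Iio 0, f σ = ∫⁻ σ in Ioi 0, f σ := by
    rw [← lintegral_indicator measurableSet_Iio, ← lintegral_indicator measurableSet_Ioi,
      ← lintegral_neg_eq_self]
    refine lintegral_congr fun σ ↦ ?_
    simp only [indicator, mem_Iio, mem_Ioi, hf, Left.neg_neg_iff]
  rw [← lintegral_add_compl f (measurableSet_Ioi (a := (0 : ℝ))), compl_Ioi,
    ← setLIntegral_congr Iio_ae_eq_Iic, hneg, two_mul]

/-- The time kernel majorising the Gram matrix of two atoms of scales `a` and `b` (functions of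
modulus at most `a⁻²` supported on a set of measure `a ^ d`) evolved up to a time difference `σ`:
see `ofReal_le_endpointKernel_add`. The two powers of `|σ|` cross at `|σ| = a²`. -/
def endpointKernel (d a σ : ℝ) : ℝ≥0∞ :=
  ENNReal.ofReal (min (a ^ (d - 3) * |σ| ^ (-(1 / 2) : ℝ)) (a ^ (2 * (d - 2)) * |σ| ^ (-d / 2)))

@[fun_prop]
lemma measurable_endpointKernel (d : ℝ) {α : Type*} [MeasurableSpace α] {a σ : α → ℝ}
    (ha : Measurable a) (hσ : Measurable σ) :
    Measurable fun x ↦ endpointKernel d (a x) (σ x) := by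
  unfold endpointKernel
  fun_prop

lemma endpointKernel_neg (d a σ : ℝ) : endpointKernel d a (-σ) = endpointKernel d a σ := by
  rw [endpointKernel, endpointKernel, abs_neg]

lemma lintegral_Ioi_endpointKernel_le {d a : ℝ} (hd : 2 < d) (ha : 0 < a) :
    ∫⁻ σ in Ioi 0, endpointKernel d a σ ≤
      ENNReal.ofReal (2 * (d - 1) / (d - 2) * a ^ (d - 2)) := by
  have hnear : ∫⁻ σ in Ioc 0 (a ^ 2), endpointKernel d a σ ≤ ENNReal.ofReal (2 * a ^ (d - 2)) := by
    calc _ ≤ ∫⁻ σ in Ioc 0 (a ^ 2),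
            ENNReal.ofReal (a ^ (d - 3)) * ENNReal.ofReal (σ ^ (-(1 / 2) : ℝ)) := by
          refine setLIntegral_mono (by fun_prop) fun σ hσ ↦ ?_
          rw [← ENNReal.ofReal_mul (by positivity), endpointKernel, abs_of_pos hσ.1]
          exact ENNReal.ofReal_le_ofReal (min_le_left _ _)
      _ = ENNReal.ofReal (2 * a ^ (d - 2)) := by
          rw [lintegral_const_mul _ (by fun_prop), lintegral_Ioc_rpow (by norm_num) (by positivity),
            ← ENNReal.ofReal_mul (by positivity), ← Real.rpow_natCast a 2, ← Real.rpow_mul ha.le,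
            mul_div_assoc', ← Real.rpow_add ha]
          ring_nf
  have hfar : ∫⁻ σ in Ioi (a ^ 2), endpointKernel d a σ ≤
      ENNReal.ofReal (2 / (d - 2) * a ^ (d - 2)) := by
    calc _ ≤ ∫⁻ σ in Ioi (a ^ 2),
            ENNReal.ofReal (a ^ (2 * (d - 2))) * ENNReal.ofReal (σ ^ (-d / 2)) := by
          refine setLIntegral_mono (by fun_prop) fun σ hσ ↦ ?_
          have hσ_pos : 0 < σ := (by positivity : 0 < a ^ 2).trans hσ
          rw [← ENNReal.ofReal_mul (by positivity), endpointKernel, abs_of_pos hσ_pos]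
          exact ENNReal.ofReal_le_ofReal (min_le_right _ _)
      _ = ENNReal.ofReal (2 / (d - 2) * a ^ (d - 2)) := by
          have hd_ne : d - 2 ≠ 0 := by linarith
          have hexp : -(-d / 2 + 1) = (d - 2) / 2 := by ring
          rw [lintegral_const_mul _ (by fun_prop), lintegral_Ioi_rpow (by linarith) (by positivity),
            ← ENNReal.ofReal_mul (by positivity), ← Real.rpow_natCast a 2, ← Real.rpow_mul ha.le,
            mul_div_assoc', ← Real.rpow_add ha, hexp]
          congr 1
          push_cast
          rw [show 2 * (d - 2) + 2 * (-d / 2 + 1) = d - 2 by ring]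
          field_simp
  have hd_ne : d - 2 ≠ 0 := by linarith
  rw [← Ioc_union_Ioi_eq_Ioi (by positivity : 0 ≤ a ^ 2)]
  refine (lintegral_union_le _ _ _).trans ((add_le_add hnear hfar).trans_eq ?_)
  rw [← ENNReal.ofReal_add (by positivity) (by positivity)]
  congr 1
  field_simp
  ring

lemma lintegral_endpointKernel_le {d a : ℝ} (hd : 2 < d) (ha : 0 ≤ a) :
    ∫⁻ σ, endpointKernel d a σ ≤ ENNReal.ofReal (4 * (d - 1) / (d - 2) * a ^ (d - 2)) := by
  rcases ha.eq_or_lt with rfl | ha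
  · have hzero (σ : ℝ) : endpointKernel d 0 σ = 0 := by
      rw [endpointKernel, Real.zero_rpow (by linarith : 2 * (d - 2) ≠ 0), zero_mul]
      exact ENNReal.ofReal_of_nonpos (min_le_right _ _)
    simp [hzero]
  · rw [lintegral_eq_two_mul_of_even (endpointKernel_neg d a)]
    refine (mul_le_mul_right (lintegral_Ioi_endpointKernel_le hd ha) 2).trans_eq ?_
    rw [← ENNReal.ofReal_ofNat 2, ← ENNReal.ofReal_mul (by norm_num)]
    congr 1
    ring

/-- The hypotheses are the dispersive and the energy bound for a pair of atoms. For
`a * b ≤ |σ|` the first and otherwise the second gives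
`B ≤ (a * b) ^ ((d - 3) / 2) * |σ| ^ (-1 / 2)`. -/
lemma ofReal_le_endpointKernel_add {d a b σ B : ℝ} (hd : 3 ≤ d) (ha : 0 ≤ a) (hb : 0 ≤ b)
    (hσ : σ ≠ 0) (hdisp : B ≤ |σ| ^ (-d / 2) * (a * b) ^ (d - 2))
    (henergy : B ≤ (a * b) ^ ((d - 4) / 2)) :
    ENNReal.ofReal B ≤ endpointKernel d a σ + endpointKernel d b σ := by
  have hs : 0 < |σ| := abs_pos.mpr hσ
  rcases (mul_nonneg ha hb).eq_or_lt with hab | hab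
  · rw [← hab, Real.zero_rpow (by linarith), mul_zero] at hdisp
    rw [ENNReal.ofReal_of_nonpos hdisp]
    exact zero_le
  have hmid : B ≤ (a * b) ^ ((d - 3) / 2) * |σ| ^ (-(1 / 2) : ℝ) := by
    rcases le_total (a * b) |σ| with h | h
    · calc B ≤ |σ| ^ (-d / 2) * (a * b) ^ (d - 2) := hdisp
        _ = (a * b) ^ ((d - 3) / 2) * (|σ| ^ (-d / 2) * (a * b) ^ ((d - 1) / 2)) := by
          rw [mul_left_comm, ← Real.rpow_add hab]; ring_nf
        _ ≤ (a * b) ^ ((d - 3) / 2) * (|σ| ^ (-d / 2) * |σ| ^ ((d - 1) / 2)) := by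
          gcongr; linarith
        _ = _ := by rw [← Real.rpow_add hs]; ring_nf
    · calc B ≤ (a * b) ^ ((d - 4) / 2) := henergy
        _ = (a * b) ^ ((d - 3) / 2) * (a * b) ^ (-(1 / 2) : ℝ) := by
          rw [← Real.rpow_add hab]; ring_nf
        _ ≤ _ := by
          gcongr ?_ * ?_
          exact Real.rpow_le_rpow_of_nonpos hs h (by norm_num)
  have hmax {c : ℝ} (hc : 0 ≤ c) (hle : a * b ≤ c * c) :
      ENNReal.ofReal B ≤ endpointKernel d c σ := by
    refine ENNReal.ofReal_le_ofReal (le_min (hmid.trans ?_) (hdisp.trans ?_))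
    · have hpow : c ^ (d - 3) = (c * c) ^ ((d - 3) / 2) := by
        rw [← sq, ← Real.rpow_natCast, ← Real.rpow_mul hc]; push_cast; ring_nf
      rw [hpow]
      gcongr
    · have hpow : c ^ (2 * (d - 2)) = (c * c) ^ (d - 2) := by
        rw [← sq, ← Real.rpow_natCast, ← Real.rpow_mul hc]; push_cast; ring_nf
      rw [hpow, mul_comm]
      gcongr
      linarith
  rcases le_total a b with h | h
  · exact (hmax hb (by gcongr)).trans le_add_self
  · exact (hmax ha (by gcongr)).trans le_self_add

lemma lintegral_endpointKernel_sub_le {d : ℝ} (hd : 2 < d) {J : Set ℝ} {a : ℝ → ℝ}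
    (ha : Measurable a) (ha0 : ∀ s, 0 ≤ a s) :
    ∫⁻ s in J, ∫⁻ s' in J, (endpointKernel d (a s) (s - s') + endpointKernel d (a s') (s - s')) ≤
      ENNReal.ofReal (8 * (d - 1) / (d - 2)) * ∫⁻ s in J, ENNReal.ofReal (a s ^ (d - 2)) := by
  have hmeas : Measurable fun p : ℝ × ℝ ↦ endpointKernel d (a p.2) (p.1 - p.2) :=
    measurable_endpointKernel d (ha.comp measurable_snd) (by fun_prop)
  have hC : 0 ≤ 4 * (d - 1) / (d - 2) := div_nonneg (by linarith) (by linarith)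
  have hrow (s : ℝ) : ∫⁻ s' in J, endpointKernel d (a s) (s - s') ≤
      ENNReal.ofReal (4 * (d - 1) / (d - 2)) * ENNReal.ofReal (a s ^ (d - 2)) := by
    refine (setLIntegral_le_lintegral _ _).trans ?_
    rw [lintegral_sub_left_eq_self (endpointKernel d (a s)) s, ← ENNReal.ofReal_mul hC]
    exact lintegral_endpointKernel_le hd (ha0 s)
  have hcol (s' : ℝ) : ∫⁻ s in J, endpointKernel d (a s') (s - s') ≤
      ENNReal.ofReal (4 * (d - 1) / (d - 2)) * ENNReal.ofReal (a s' ^ (d - 2)) := by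
    refine le_trans (le_of_eq (lintegral_congr fun s ↦ ?_)) (hrow s')
    rw [← endpointKernel_neg, neg_sub]
  calc _ = (∫⁻ s in J, ∫⁻ s' in J, endpointKernel d (a s) (s - s')) +
          ∫⁻ s' in J, ∫⁻ s in J, endpointKernel d (a s') (s - s') := by
        rw [← lintegral_lintegral_swap (f := fun s s' ↦ endpointKernel d (a s') (s - s'))
            hmeas.aemeasurable, ← lintegral_add_right _ hmeas.lintegral_prod_right']
        refine lintegral_congr fun s ↦ lintegral_add_left ?_ _
        exact measurable_endpointKernel d measurable_const (by fun_prop)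
    _ ≤ (∫⁻ s in J, ENNReal.ofReal (4 * (d - 1) / (d - 2)) * ENNReal.ofReal (a s ^ (d - 2))) +
          ∫⁻ s in J, ENNReal.ofReal (4 * (d - 1) / (d - 2)) * ENNReal.ofReal (a s ^ (d - 2)) := by
        gcongr with s s'
        · exact hrow s
        · exact hcol s'
    _ = _ := by
        rw [lintegral_const_mul _ (by fun_prop), ← add_mul, ← ENNReal.ofReal_add hC hC]
        ring_nf

end EndpointKernel

section Atoms

open ComplexConjugate

variable {V : Type*} [NormedAddCommGroup V] [InnerProductSpace ℝ V] [FiniteDimensional ℝ V]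
  [MeasurableSpace V] [BorelSpace V] {d : ℕ}

lemma enorm_integral_schrod_mul_conj_le_endpointKernel (hV : Module.finrank ℝ V = d) (hd : 3 ≤ d)
    {ε τ τ' : ℝ} (hε : 0 < ε) (hτ : τ ≠ 0) (hτ' : τ' ≠ 0) (hne : τ ≠ τ') {a b : ℝ} (ha : 0 ≤ a)
    (hb : 0 ≤ b) {f g : V → ℂ} (hf : Measurable f) (hg : Measurable g)
    (hf1 : ∫⁻ x, ‖f x‖ₑ ≤ ENNReal.ofReal (a ^ ((d : ℝ) - 2)))
    (hf2 : ∫⁻ x, ‖f x‖ₑ ^ 2 ≤ ENNReal.ofReal (a ^ ((d : ℝ) - 4)))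
    (hg1 : ∫⁻ x, ‖g x‖ₑ ≤ ENNReal.ofReal (b ^ ((d : ℝ) - 2)))
    (hg2 : ∫⁻ x, ‖g x‖ₑ ^ 2 ≤ ENNReal.ofReal (b ^ ((d : ℝ) - 4))) :
    ‖∫ x, schrod d τ f x * conj (schrod d τ' g x) ∂gaussianDamping V ε‖ₑ ≤
      endpointKernel d a (τ - τ') + endpointKernel d b (τ - τ') := by
  have hfi : Integrable f := ⟨hf.aestronglyMeasurable, hf1.trans_lt ENNReal.ofReal_lt_top⟩
  have hgi : Integrable g := ⟨hg.aestronglyMeasurable, hg1.trans_lt ENNReal.ofReal_lt_top⟩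
  have hdiff : 0 < |τ - τ'| := abs_pos.mpr (sub_ne_zero.mpr hne)
  have hd' : (3 : ℝ) ≤ d := mod_cast hd
  have hsqrt {c : ℝ} (hc : 0 ≤ c) {I : ℝ≥0∞} (hI : I ≤ ENNReal.ofReal (c ^ ((d : ℝ) - 4))) :
      I ^ (1 / 2 : ℝ) ≤ ENNReal.ofReal (c ^ (((d : ℝ) - 4) / 2)) := by
    refine (ENNReal.rpow_le_rpow hI (by norm_num)).trans_eq ?_
    rw [ENNReal.ofReal_rpow_of_nonneg (Real.rpow_nonneg hc _) (by norm_num), ← Real.rpow_mul hc]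
    ring_nf
  rw [← ofReal_norm]
  refine ofReal_le_endpointKernel_add hd' ha hb (sub_ne_zero.mpr hne) ?_ ?_ <;>
    refine (ENNReal.ofReal_le_ofReal_iff (by positivity)).mp ?_ <;> rw [ofReal_norm]
  · refine (enorm_integral_schrod_mul_conj_le_dispersive hV hε hτ hτ' hne hf hfi hg hgi).trans ?_
    rw [ENNReal.ofReal_mul (by positivity), Real.mul_rpow ha hb,
      ENNReal.ofReal_mul (by positivity)]
    gcongr ENNReal.ofReal ?_ * (?_ * ?_)
    refine Real.rpow_le_rpow_of_nonpos hdiff ?_ (by linarith)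
    nlinarith [Real.pi_gt_three]
  · refine (enorm_integral_schrod_mul_conj_le_energy hV hε hτ hτ' hf hfi hg hgi).trans ?_
    rw [Real.mul_rpow ha hb, ENNReal.ofReal_mul (by positivity)]
    gcongr
    exacts [hsqrt ha hf2, hsqrt hb hg2]

lemma lintegral_enorm_setIntegral_schrod_sq_le (hV : Module.finrank ℝ V = d) (hd : 3 ≤ d)
    {δ : ℝ} (hδ : 0 < δ) {J : Set ℝ} (hJ : MeasurableSet J) (hJδ : ∀ τ ∈ J, δ ≤ |τ|)
    {φ : ℝ → V → ℂ} (hφ : Measurable (Function.uncurry φ)) {a : ℝ → ℝ} (ha : Measurable a)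
    (ha0 : ∀ τ, 0 ≤ a τ) (hai : IntegrableOn (fun τ ↦ a τ ^ ((d : ℝ) - 2)) J)
    (hφ1 : ∀ τ ∈ J, ∫⁻ x, ‖φ τ x‖ₑ ≤ ENNReal.ofReal (a τ ^ ((d : ℝ) - 2)))
    (hφ2 : ∀ τ ∈ J, ∫⁻ x, ‖φ τ x‖ₑ ^ 2 ≤ ENNReal.ofReal (a τ ^ ((d : ℝ) - 4))) :
    ∫⁻ x, ‖∫ τ in J, schrod d τ (φ τ) x‖ₑ ^ 2 ≤
      ENNReal.ofReal (8 * ((d : ℝ) - 1) / ((d : ℝ) - 2)) *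
        ∫⁻ τ in J, ENNReal.ofReal (a τ ^ ((d : ℝ) - 2)) := by
  have hd' : (2 : ℝ) < d := mod_cast hd
  have hJ_ne {τ : ℝ} (hτ : τ ∈ J) : τ ≠ 0 := abs_pos.mp (hδ.trans_le (hJδ τ hτ))
  have hmeas : Measurable (Function.uncurry fun τ x ↦ schrod d τ (φ τ) x) :=
    measurable_schrod d measurable_fst
      (hφ.comp (measurable_fst.fst.prodMk measurable_snd)) measurable_snd
  have hbound : ∀ᵐ τ ∂volume.restrict J, ∀ x, ‖schrod d τ (φ τ) x‖ ≤
      (4 * π * δ) ^ (-(d : ℝ) / 2) * a τ ^ ((d : ℝ) - 2) := by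
    filter_upwards [ae_restrict_mem hJ] with τ hτ x
    refine (ENNReal.ofReal_le_ofReal_iff (mul_nonneg (by positivity)
      (Real.rpow_nonneg (ha0 τ) _))).mp ?_
    rw [ofReal_norm, ENNReal.ofReal_mul (by positivity)]
    exact (enorm_schrod_le d hδ (hJδ τ hτ) _ x).trans (by gcongr; exact hφ1 τ hτ)
  refine lintegral_le_of_forall_gaussianDamping_le
    (hmeas.stronglyMeasurable.integral_prod_left.measurable.enorm.pow_const 2) fun ε hε ↦ ?_
  have := isFiniteMeasure_gaussianDamping (V := V) hε
  refine (lintegral_enorm_integral_sq_le hmeas (hai.const_mul _) hbound).trans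
    (le_trans ?_ (lintegral_endpointKernel_sub_le hd' ha ha0))
  refine setLIntegral_mono' hJ fun τ hτ ↦ setLIntegral_mono_ae' hJ ?_
  filter_upwards [Measure.ae_ne volume τ] with τ' hne hτ'
  exact enorm_integral_schrod_mul_conj_le_endpointKernel hV hd hε (hJ_ne hτ) (hJ_ne hτ') hne.symm
    (ha0 τ) (ha0 τ') hφ.of_uncurry_left hφ.of_uncurry_left (hφ1 τ hτ) (hφ2 τ hτ) (hφ1 τ' hτ')
    (hφ2 τ' hτ')

end Atoms

section Duality

variable {V : Type*} [NormedAddCommGroup V] [InnerProductSpace ℝ V] [FiniteDimensional ℝ V]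
  [MeasurableSpace V] [BorelSpace V]

lemma integral_mul_integral_schrod {α : Type*} [MeasurableSpace α] {ν : Measure α} [SFinite ν]
    (d : ℕ) {δ : ℝ} (hδ : 0 < δ) {τ : α → ℝ} (hτ : Measurable τ) (hτδ : ∀ᵐ a ∂ν, δ ≤ |τ a|)
    {φ : α → V → ℂ} (hφi : Integrable (Function.uncurry φ) (ν.prod volume)) {g : V → ℂ}
    (hgi : Integrable g) :
    ∫ x, g x * ∫ a, schrod d (τ a) (φ a) x ∂ν =
      ∫ p, φ p.1 p.2 * schrod d (τ p.1) g p.2 ∂(ν.prod volume) := by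
  have hτδ' : ∀ᵐ p ∂(ν.prod (volume : Measure V)), δ ≤ |τ p.1| :=
    Measure.quasiMeasurePreserving_fst.ae hτδ
  have hne {a : α} (ha : δ ≤ |τ a|) : τ a ≠ 0 := abs_pos.mp (hδ.trans_le ha)
  have hint (x : V) : Integrable (fun p : α × V ↦ schrodKernel d (τ p.1) x p.2 * φ p.1 p.2)
      (ν.prod volume) := by
    refine hφi.bdd_mul (c := (4 * π * δ) ^ (-(d : ℝ) / 2))
      (Measurable.aestronglyMeasurable (by fun_prop)) ?_
    filter_upwards [hτδ'] with p hp using norm_schrodKernel_le d hδ hp _ _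
  have hint' : Integrable (fun q : V × α × V ↦
      g q.1 * (schrodKernel d (τ q.2.1) q.1 q.2.2 * φ q.2.1 q.2.2))
      (volume.prod (ν.prod volume)) := by
    have hbdd := (hgi.mul_prod hφi).bdd_mul (c := (4 * π * δ) ^ (-(d : ℝ) / 2))
      (f := fun q : V × α × V ↦ schrodKernel d (τ q.2.1) q.1 q.2.2)
      (Measurable.aestronglyMeasurable (by fun_prop)) (by
        filter_upwards [Measure.quasiMeasurePreserving_snd.ae hτδ'] with q hq using
          norm_schrodKernel_le d hδ hq _ _)
    exact hbdd.congr (Filter.Eventually.of_forall fun q ↦ mul_left_comm _ _ _)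
  calc _ = ∫ x, ∫ p, g x * (schrodKernel d (τ p.1) x p.2 * φ p.1 p.2) ∂(ν.prod volume) := by
        refine integral_congr_ae (Filter.Eventually.of_forall fun x ↦ ?_)
        simp only
        rw [integral_const_mul, integral_prod _ (hint x)]
        congr 1
        exact integral_congr_ae (hτδ.mono fun a ha ↦ schrod_apply d (hne ha) _ _)
    _ = ∫ p : α × V, (∫ x, g x * (schrodKernel d (τ p.1) x p.2 * φ p.1 p.2)) ∂(ν.prod volume) :=
        integral_integral_swap hint'
    _ = _ := by
        refine integral_congr_ae (hτδ'.mono fun p hp ↦ ?_)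
        simp only
        rw [schrod_apply d (hne hp), ← integral_const_mul]
        refine integral_congr_ae (Filter.Eventually.of_forall fun x ↦ ?_)
        simp only
        rw [schrodKernel_comm d (τ p.1) x p.2]
        ring

lemma integrable_mul_schrod {α : Type*} [MeasurableSpace α] {ν : Measure α} [SFinite ν]
    (d : ℕ) {δ : ℝ} (hδ : 0 < δ) {τ : α → ℝ} (hτ : Measurable τ) (hτδ : ∀ᵐ a ∂ν, δ ≤ |τ a|)
    {φ : α → V → ℂ} (hφi : Integrable (Function.uncurry φ) (ν.prod volume)) {g : V → ℂ}
    (hg : Measurable g) (hgi : Integrable g) :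
    Integrable (fun p ↦ φ p.1 p.2 * schrod d (τ p.1) g p.2) (ν.prod volume) := by
  have hw : Measurable fun p : α × V ↦ schrod d (τ p.1) g p.2 :=
    measurable_schrod d (hτ.comp measurable_fst) (φ := fun _ ↦ g) (hg.comp measurable_snd)
      measurable_snd
  refine hφi.mul_bdd (c := (4 * π * δ) ^ (-(d : ℝ) / 2) * ∫ y, ‖g y‖) hw.aestronglyMeasurable ?_
  filter_upwards [Measure.quasiMeasurePreserving_fst.ae hτδ] with p hp
  refine (ENNReal.ofReal_le_ofReal_iff (by positivity)).mp ?_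
  rw [ofReal_norm, ENNReal.ofReal_mul (by positivity), ofReal_integral_norm_eq_lintegral_enorm hgi]
  exact enorm_schrod_le d hδ hp g _

end Duality

section LevelAtom

open ComplexConjugate

variable {α : Type*} [MeasurableSpace α] {μ : Measure α} {d ν : ℝ} {w : α → ℂ}

/-- The scale of the level set `{‖w‖ > ν}`: the side length of a `d`-dimensional cube of the same
measure. -/
def levelScale (d ν : ℝ) (μ : Measure α) (w : α → ℂ) : ℝ := μ.real {x | ν < ‖w x‖} ^ (1 / d)

/-- The atom dual to `w` at height `ν`: it is supported on `{‖w‖ > ν}`, has constant modulus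
`levelScale d ν μ w ^ (-2)` there, and its phase is opposite to that of `w`. -/
def levelAtom (d ν : ℝ) (μ : Measure α) (w : α → ℂ) : α → ℂ :=
  {x | ν < ‖w x‖}.indicator fun x ↦
    ((levelScale d ν μ w ^ (-2 : ℝ) / ‖w x‖ : ℝ) : ℂ) * conj (w x)

lemma levelScale_nonneg : 0 ≤ levelScale d ν μ w := Real.rpow_nonneg measureReal_nonneg _

lemma ofReal_levelScale_rpow {p : ℝ} (hp : 0 ≤ p / d) (hμ : μ {x | ν < ‖w x‖} ≠ ∞) :
    ENNReal.ofReal (levelScale d ν μ w ^ p) = μ {x | ν < ‖w x‖} ^ (p / d) := by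
  rw [levelScale, ← Real.rpow_mul measureReal_nonneg, one_div_mul_eq_div,
    ← ENNReal.ofReal_rpow_of_nonneg measureReal_nonneg hp, ofReal_measureReal hμ]

lemma enorm_levelAtom (hν : 0 ≤ ν) (x : α) :
    ‖levelAtom d ν μ w x‖ₑ = {x | ν < ‖w x‖}.indicator
      (fun _ ↦ ENNReal.ofReal (levelScale d ν μ w ^ (-2 : ℝ))) x := by
  rw [levelAtom, enorm_indicator_eq_indicator_enorm]
  refine congrFun (indicator_congr fun x (hx : ν < ‖w x‖) ↦ ?_) x
  have hw : ‖w x‖ ≠ 0 := (hν.trans_lt hx).ne'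
  rw [← ofReal_norm, norm_mul, RCLike.norm_conj, Complex.norm_real, Real.norm_of_nonneg
    (div_nonneg (Real.rpow_nonneg levelScale_nonneg _) (norm_nonneg _)), div_mul_cancel₀ _ hw]

lemma lintegral_enorm_levelAtom_pow (hd : d ≠ 0) (hν : 0 ≤ ν) (hw : Measurable w)
    (hμ : μ {x | ν < ‖w x‖} ≠ ∞) {k : ℕ} (hk : k ≠ 0) :
    ∫⁻ x, ‖levelAtom d ν μ w x‖ₑ ^ k ∂μ =
      ENNReal.ofReal (levelScale d ν μ w ^ (-2 * k : ℝ) * levelScale d ν μ w ^ d) := by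
  have hscale := levelScale_nonneg (d := d) (ν := ν) (μ := μ) (w := w)
  have hmass : μ {x | ν < ‖w x‖} = ENNReal.ofReal (levelScale d ν μ w ^ d) := by
    rw [ofReal_levelScale_rpow (by rw [div_self hd]; exact zero_le_one) hμ, div_self hd,
      ENNReal.rpow_one]
  have hpow (x : α) : ‖levelAtom d ν μ w x‖ₑ ^ k = {x | ν < ‖w x‖}.indicator
      (fun _ ↦ ENNReal.ofReal (levelScale d ν μ w ^ (-2 : ℝ)) ^ k) x := by
    rw [enorm_levelAtom hν]
    by_cases hx : x ∈ {x | ν < ‖w x‖}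
    · simp only [indicator_of_mem hx]
    · simp only [indicator_of_notMem hx, zero_pow hk]
  simp only [hpow]
  rw [lintegral_indicator_const (measurableSet_lt measurable_const hw.norm),
    hmass, ← ENNReal.ofReal_pow (by positivity),
    ← ENNReal.ofReal_mul (by positivity), ← Real.rpow_mul_natCast hscale]

lemma lintegral_enorm_levelAtom (hd : 2 < d) (hν : 0 ≤ ν) (hw : Measurable w)
    (hμ : μ {x | ν < ‖w x‖} ≠ ∞) :
    ∫⁻ x, ‖levelAtom d ν μ w x‖ₑ ∂μ = ENNReal.ofReal (levelScale d ν μ w ^ (d - 2)) := by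
  have hpow := lintegral_enorm_levelAtom_pow (by linarith) hν hw hμ one_ne_zero (d := d)
  simp only [pow_one, Nat.cast_one, mul_one] at hpow
  rw [hpow, ← Real.rpow_add' levelScale_nonneg (by linarith)]
  ring_nf

lemma lintegral_enorm_levelAtom_sq_le (hd : d ≠ 0) (hν : 0 ≤ ν) (hw : Measurable w)
    (hμ : μ {x | ν < ‖w x‖} ≠ ∞) :
    ∫⁻ x, ‖levelAtom d ν μ w x‖ₑ ^ 2 ∂μ ≤ ENNReal.ofReal (levelScale d ν μ w ^ (d - 4)) := by
  rw [lintegral_enorm_levelAtom_pow hd hν hw hμ two_ne_zero]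
  refine ENNReal.ofReal_le_ofReal ((Real.le_rpow_add levelScale_nonneg _ _).trans_eq ?_)
  push_cast
  ring_nf

lemma levelAtom_mul (x : α) :
    levelAtom d ν μ w x * w x = ((‖levelAtom d ν μ w x‖ * ‖w x‖ : ℝ) : ℂ) := by
  by_cases hx : x ∈ {x | ν < ‖w x‖}
  · have hnonneg : 0 ≤ levelScale d ν μ w ^ (-2 : ℝ) / ‖w x‖ :=
      div_nonneg (Real.rpow_nonneg levelScale_nonneg _) (norm_nonneg _)
    rw [levelAtom, indicator_of_mem hx, mul_assoc, Complex.conj_mul', norm_mul, RCLike.norm_conj,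
      Complex.norm_real, Real.norm_of_nonneg hnonneg]
    push_cast
    ring
  · simp [levelAtom, indicator_of_notMem hx]

lemma mul_enorm_levelAtom_le (hν : 0 ≤ ν) (x : α) :
    ENNReal.ofReal ν * ‖levelAtom d ν μ w x‖ₑ ≤
      ENNReal.ofReal (‖levelAtom d ν μ w x‖ * ‖w x‖) := by
  rw [← ofReal_norm, ← ENNReal.ofReal_mul hν, mul_comm ν]
  by_cases hx : x ∈ {x | ν < ‖w x‖}
  · gcongr
    exact le_of_lt hx
  · simp [levelAtom, indicator_of_notMem hx]

lemma measurable_levelScale {β : Type*} [MeasurableSpace β] [SFinite μ] {w : β → α → ℂ}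
    (hw : Measurable (Function.uncurry w)) :
    Measurable fun b ↦ levelScale d ν μ (w b) :=
  (measurable_measure_prodMk_left
    (measurableSet_lt measurable_const hw.norm)).ennreal_toReal.pow_const _

lemma measurable_levelAtom {β : Type*} [MeasurableSpace β] [SFinite μ] {w : β → α → ℂ}
    (hw : Measurable (Function.uncurry w)) :
    Measurable (Function.uncurry fun b ↦ levelAtom d ν μ (w b)) := by
  refine Measurable.indicator (s := {p : β × α | ν < ‖Function.uncurry w p‖})
    (f := fun p ↦ ((levelScale d ν μ (w p.1) ^ (-2 : ℝ) / ‖Function.uncurry w p‖ : ℝ) : ℂ) *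
      conj (Function.uncurry w p)) (Measurable.mul ?_ ?_)
    (measurableSet_lt measurable_const hw.norm)
  · exact Complex.measurable_ofReal.comp
      ((((measurable_levelScale hw).comp measurable_fst).pow_const _).div hw.norm)
  · exact Complex.continuous_conj.measurable.comp hw

lemma mul_lintegral_levelScale_le_enorm_integral {β : Type*} [MeasurableSpace β] {ρ : Measure β}
    [SFinite μ] (hd : 2 < d) (hν : 0 ≤ ν) {w : β → α → ℂ} (hw : Measurable (Function.uncurry w))
    (hμ : ∀ᵐ b ∂ρ, μ {x | ν < ‖w b x‖} ≠ ∞)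
    (hint : Integrable (fun p ↦ levelAtom d ν μ (w p.1) p.2 * w p.1 p.2) (ρ.prod μ)) :
    ENNReal.ofReal ν * ∫⁻ b, ENNReal.ofReal (levelScale d ν μ (w b) ^ (d - 2)) ∂ρ ≤
      ‖∫ p, levelAtom d ν μ (w p.1) p.2 * w p.1 p.2 ∂(ρ.prod μ)‖ₑ := by
  have hreal : Integrable (fun p ↦ ‖levelAtom d ν μ (w p.1) p.2‖ * ‖w p.1 p.2‖) (ρ.prod μ) := by
    simpa only [norm_mul] using hint.norm
  have hnonneg (p : β × α) : 0 ≤ ‖levelAtom d ν μ (w p.1) p.2‖ * ‖w p.1 p.2‖ := by positivity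
  simp only [levelAtom_mul]
  rw [integral_complex_ofReal, ← ofReal_norm, Complex.norm_real,
    Real.norm_of_nonneg (integral_nonneg hnonneg),
    ofReal_integral_eq_lintegral_ofReal hreal (Filter.Eventually.of_forall hnonneg),
    lintegral_prod _ hreal.aestronglyMeasurable.aemeasurable.ennreal_ofReal,
    ← lintegral_const_mul' _ _ ENNReal.ofReal_ne_top]
  refine lintegral_mono_ae (hμ.mono fun b hb ↦ ?_)
  rw [← lintegral_enorm_levelAtom hd hν hw.of_uncurry_left hb,
    ← lintegral_const_mul' _ _ ENNReal.ofReal_ne_top]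
  exact lintegral_mono fun x ↦ mul_enorm_levelAtom_le hν x

end LevelAtom

section WeakEndpoint

variable {V : Type*} [NormedAddCommGroup V] [InnerProductSpace ℝ V] [FiniteDimensional ℝ V]
  [MeasurableSpace V] [BorelSpace V] {d : ℕ}

lemma measure_lt_norm_schrod_le (hV : Module.finrank ℝ V = d) {τ ν : ℝ} (hτ : τ ≠ 0) (hν : 0 < ν)
    {g : V → ℂ} (hg : Measurable g) (hgi : Integrable g) :
    volume {x | ν < ‖schrod d τ g x‖} ≤ (∫⁻ x, ‖g x‖ₑ ^ 2) / ENNReal.ofReal ν ^ 2 := by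
  have hmeas := (measurable_schrod_const d τ hg).enorm.pow_const 2
  have hpos : ENNReal.ofReal ν ^ 2 ≠ 0 := pow_ne_zero 2 (ENNReal.ofReal_pos.mpr hν).ne'
  refine le_trans (measure_mono fun x (hx : ν < ‖schrod d τ g x‖) ↦ ?_)
    ((meas_ge_le_lintegral_div hmeas.aemeasurable hpos (by simp)).trans
      (ENNReal.div_le_div_right (lintegral_enorm_schrod_sq_le hV hτ hg hgi) _))
  rw [mem_ofPred_eq, ← ofReal_norm]
  gcongr

lemma enorm_integral_mul_schrod_le (hV : Module.finrank ℝ V = d) (hd : 3 ≤ d)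
    {δ : ℝ} (hδ : 0 < δ) {J : Set ℝ} (hJ : MeasurableSet J) (hJδ : ∀ τ ∈ J, δ ≤ |τ|)
    {φ : ℝ → V → ℂ} (hφ : Measurable (Function.uncurry φ))
    (hφi : Integrable (Function.uncurry φ) ((volume.restrict J).prod volume))
    {a : ℝ → ℝ} (ha : Measurable a) (ha0 : ∀ τ, 0 ≤ a τ)
    (hai : IntegrableOn (fun τ ↦ a τ ^ ((d : ℝ) - 2)) J)
    (hφ1 : ∀ τ ∈ J, ∫⁻ x, ‖φ τ x‖ₑ ≤ ENNReal.ofReal (a τ ^ ((d : ℝ) - 2)))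
    (hφ2 : ∀ τ ∈ J, ∫⁻ x, ‖φ τ x‖ₑ ^ 2 ≤ ENNReal.ofReal (a τ ^ ((d : ℝ) - 4)))
    {g : V → ℂ} (hg : Measurable g) (hgi : Integrable g) :
    ‖∫ p, φ p.1 p.2 * schrod d p.1 g p.2 ∂((volume.restrict J).prod volume)‖ₑ ≤
      (∫⁻ x, ‖g x‖ₑ ^ 2) ^ (1 / 2 : ℝ) * (ENNReal.ofReal (8 * ((d : ℝ) - 1) / ((d : ℝ) - 2)) *
        ∫⁻ τ in J, ENNReal.ofReal (a τ ^ ((d : ℝ) - 2))) ^ (1 / 2 : ℝ) := by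
  have hT : Measurable fun x ↦ ∫ τ in J, schrod d τ (φ τ) x :=
    (measurable_schrod d measurable_fst (φ := fun p : ℝ × V ↦ φ p.1)
      (hφ.comp (measurable_fst.fst.prodMk measurable_snd))
      measurable_snd).stronglyMeasurable.integral_prod_left.measurable
  calc _ = ‖∫ x, g x * ∫ τ in J, schrod d τ (φ τ) x‖ₑ := by
        rw [← integral_mul_integral_schrod d hδ (τ := fun τ ↦ τ) measurable_id
          ((ae_restrict_mem hJ).mono hJδ) hφi hgi]
    _ ≤ ∫⁻ x, ‖g x‖ₑ * ‖∫ τ in J, schrod d τ (φ τ) x‖ₑ := by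
        simpa only [enorm_mul] using enorm_integral_le_lintegral_enorm
          fun x ↦ g x * ∫ τ in J, schrod d τ (φ τ) x
    _ ≤ (∫⁻ x, ‖g x‖ₑ ^ 2) ^ (1 / 2 : ℝ) *
          (∫⁻ x, ‖∫ τ in J, schrod d τ (φ τ) x‖ₑ ^ 2) ^ (1 / 2 : ℝ) := by
        simpa only [ENNReal.rpow_two, Pi.mul_apply] using
          ENNReal.lintegral_mul_le_Lp_mul_Lq volume Real.HolderConjugate.two_two
            hg.enorm.aemeasurable hT.enorm.aemeasurable
    _ ≤ _ := by
        gcongr _ * ?_ ^ (1 / 2 : ℝ)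
        exact lintegral_enorm_setIntegral_schrod_sq_le hV hd hδ hJ hJδ hφ ha ha0 hai hφ1 hφ2

lemma sq_mul_lintegral_levelScale_schrod_le (hV : Module.finrank ℝ V = d) (hd : 3 ≤ d)
    {δ ν : ℝ} (hδ : 0 < δ) (hν : 0 ≤ ν) {J : Set ℝ} (hJ : MeasurableSet J)
    (hJδ : ∀ τ ∈ J, δ ≤ |τ|) {g : V → ℂ} (hg : Measurable g) (hgi : Integrable g)
    (hlevel : ∀ τ ∈ J, volume {x | ν < ‖schrod d τ g x‖} ≠ ∞)
    (hscale : IntegrableOn (fun τ ↦ levelScale d ν volume (schrod d τ g) ^ ((d : ℝ) - 2)) J) :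
    ENNReal.ofReal ν ^ 2 *
        ∫⁻ τ in J, ENNReal.ofReal (levelScale d ν volume (schrod d τ g) ^ ((d : ℝ) - 2)) ≤
      ENNReal.ofReal (8 * ((d : ℝ) - 1) / ((d : ℝ) - 2)) * ∫⁻ x, ‖g x‖ₑ ^ 2 := by
  have hd' : (2 : ℝ) < d := mod_cast hd
  set C := ENNReal.ofReal (8 * ((d : ℝ) - 1) / ((d : ℝ) - 2))
  set N := ∫⁻ x, ‖g x‖ₑ ^ 2
  set G := ∫⁻ τ in J, ENNReal.ofReal (levelScale d ν volume (schrod d τ g) ^ ((d : ℝ) - 2))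
  have hG : G ≠ ∞ := hscale.lintegral_lt_top.ne
  have hw : Measurable (Function.uncurry fun τ ↦ schrod d τ g) :=
    measurable_schrod d measurable_fst (φ := fun _ ↦ g) (hg.comp measurable_snd) measurable_snd
  set φ : ℝ → V → ℂ := fun τ ↦ levelAtom d ν volume (schrod d τ g)
  have hφ : Measurable (Function.uncurry φ) := measurable_levelAtom hw
  have hφ1 : ∀ τ ∈ J, ∫⁻ x, ‖φ τ x‖ₑ = _ := fun τ hτ ↦
    lintegral_enorm_levelAtom hd' hν hw.of_uncurry_left (hlevel τ hτ)
  have hφi : Integrable (Function.uncurry φ) ((volume.restrict J).prod volume) := by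
    refine ⟨hφ.aestronglyMeasurable, ?_⟩
    rw [hasFiniteIntegral_iff_enorm, lintegral_prod _ hφ.enorm.aemeasurable]
    exact (setLIntegral_congr_fun hJ hφ1).trans_lt hG.lt_top
  have hdual : ENNReal.ofReal ν * G ≤ N ^ (1 / 2 : ℝ) * (C * G) ^ (1 / 2 : ℝ) :=
    (mul_lintegral_levelScale_le_enorm_integral hd' hν hw ((ae_restrict_mem hJ).mono hlevel)
      (integrable_mul_schrod d hδ measurable_id ((ae_restrict_mem hJ).mono hJδ) hφi hg hgi)).trans
    (enorm_integral_mul_schrod_le hV hd hδ hJ hJδ hφ hφi (measurable_levelScale hw)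
      (fun τ ↦ levelScale_nonneg) hscale (fun τ hτ ↦ (hφ1 τ hτ).le) (fun τ hτ ↦
        lintegral_enorm_levelAtom_sq_le (by linarith) hν hw.of_uncurry_left (hlevel τ hτ)) hg hgi)
  have hsq : ENNReal.ofReal ν ^ 2 * G * G ≤ C * N * G := by
    calc ENNReal.ofReal ν ^ 2 * G * G = (ENNReal.ofReal ν * G) ^ 2 := by ring
      _ ≤ (N ^ (1 / 2 : ℝ) * (C * G) ^ (1 / 2 : ℝ)) ^ 2 := by gcongr
      _ = C * N * G := by
        rw [← ENNReal.mul_rpow_of_nonneg _ _ (by norm_num), ← ENNReal.rpow_mul_natCast,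
          Nat.cast_ofNat, one_div_mul_cancel two_ne_zero, ENNReal.rpow_one]
        ring
  rcases eq_or_ne G 0 with h | h
  · simp [h]
  · exact (ENNReal.mul_le_mul_iff_left h hG).mp hsq

/-- The endpoint Strichartz estimate into weak `L^{2d/(d-2)}`, by duality with the level atoms. -/
lemma lintegral_measure_lt_norm_schrod_rpow_le (hV : Module.finrank ℝ V = d) (hd : 3 ≤ d)
    {δ ν : ℝ} (hδ : 0 < δ) (hν : 0 < ν) {J : Set ℝ} (hJ : MeasurableSet J) (hJ_fin : volume J ≠ ∞)
    (hJδ : ∀ τ ∈ J, δ ≤ |τ|) {g : V → ℂ} (hg : Measurable g) (hgi : Integrable g) :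
    ENNReal.ofReal ν ^ 2 *
        ∫⁻ τ in J, volume {x | ν < ‖schrod d τ g x‖} ^ (((d : ℝ) - 2) / d) ≤
      ENNReal.ofReal (8 * ((d : ℝ) - 1) / ((d : ℝ) - 2)) * ∫⁻ x, ‖g x‖ₑ ^ 2 := by
  have hd' : (2 : ℝ) < d := mod_cast hd
  have hp : 0 ≤ ((d : ℝ) - 2) / d := div_nonneg (by linarith) (by linarith)
  set C := ENNReal.ofReal (8 * ((d : ℝ) - 1) / ((d : ℝ) - 2))
  set N := ∫⁻ x, ‖g x‖ₑ ^ 2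
  rcases eq_or_ne N ∞ with hN_top | hN_top
  · have hC_ne : C ≠ 0 := (ENNReal.ofReal_pos.mpr (div_pos (by linarith) (by linarith))).ne'
    rw [hN_top, ENNReal.mul_top hC_ne]
    exact le_top
  have hlevel {τ : ℝ} (hτ : τ ∈ J) : volume {x | ν < ‖schrod d τ g x‖} ≤
      N / ENNReal.ofReal ν ^ 2 :=
    measure_lt_norm_schrod_le hV (abs_pos.mp (hδ.trans_le (hJδ τ hτ))) hν hg hgi
  have hM : N / ENNReal.ofReal ν ^ 2 ≠ ∞ :=
    ENNReal.div_ne_top hN_top (pow_ne_zero 2 (ENNReal.ofReal_pos.mpr hν).ne')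
  have hlevel_fin {τ : ℝ} (hτ : τ ∈ J) : volume {x | ν < ‖schrod d τ g x‖} ≠ ∞ :=
    ((hlevel hτ).trans_lt hM.lt_top).ne
  set a : ℝ → ℝ := fun τ ↦ levelScale d ν volume (schrod d τ g)
  have ha_pow {τ : ℝ} (hτ : τ ∈ J) : ENNReal.ofReal (a τ ^ ((d : ℝ) - 2)) =
      volume {x | ν < ‖schrod d τ g x‖} ^ (((d : ℝ) - 2) / d) :=
    ofReal_levelScale_rpow hp (hlevel_fin hτ)
  have hw : Measurable (Function.uncurry fun τ ↦ schrod d τ g) :=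
    measurable_schrod d measurable_fst (φ := fun _ ↦ g) (hg.comp measurable_snd) measurable_snd
  have ha : Measurable a := measurable_levelScale hw
  have ha_fin : ∫⁻ τ in J, ENNReal.ofReal (a τ ^ ((d : ℝ) - 2)) < ∞ := by
    refine (setLIntegral_mono' hJ fun τ hτ ↦ (ha_pow hτ).trans_le
      (ENNReal.rpow_le_rpow (hlevel hτ) hp)).trans_lt ?_
    rw [setLIntegral_const]
    exact ENNReal.mul_lt_top (ENNReal.rpow_lt_top_of_nonneg hp hM) hJ_fin.lt_top
  rw [← setLIntegral_congr_fun hJ fun τ hτ ↦ ha_pow hτ]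
  refine sq_mul_lintegral_levelScale_schrod_le hV hd hδ hν.le hJ hJδ hg hgi
    (fun τ hτ ↦ hlevel_fin hτ) ⟨(ha.pow_const _).aestronglyMeasurable, ?_⟩
  rwa [hasFiniteIntegral_iff_ofReal (Filter.Eventually.of_forall fun τ ↦
    Real.rpow_nonneg levelScale_nonneg _)]

end WeakEndpoint

section LorentzEmbedding

lemma mul_ofReal_rpow_le_lintegral_of_antitone {h : ℝ → ℝ≥0∞} (hh : Antitone h) {r ν : ℝ}
    (hr : 0 < r) (hν : 0 ≤ ν) :
    h ν * ENNReal.ofReal (ν ^ r) ≤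
      ENNReal.ofReal r * ∫⁻ l in Ioi 0, h l * ENNReal.ofReal (l ^ (r - 1)) := by
  calc h ν * ENNReal.ofReal (ν ^ r)
      = ENNReal.ofReal r * (h ν * ∫⁻ l in Ioc 0 ν, ENNReal.ofReal (l ^ (r - 1))) := by
        rw [lintegral_Ioc_rpow (by linarith) hν, sub_add_cancel, mul_left_comm,
          ← ENNReal.ofReal_mul hr.le, mul_div_cancel₀ _ hr.ne']
    _ ≤ ENNReal.ofReal r * ∫⁻ l in Ioc 0 ν, h l * ENNReal.ofReal (l ^ (r - 1)) := by
        rw [← lintegral_const_mul _ (by fun_prop)]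
        gcongr ENNReal.ofReal r * ?_
        exact setLIntegral_mono (hh.measurable.mul (by fun_prop)) fun l hl ↦ by
          gcongr
          exact hh hl.2
    _ ≤ _ := by
        gcongr
        exact Ioc_subset_Ioi_self

lemma lintegral_antitone_rpow_le {h : ℝ → ℝ≥0∞} (hh : Antitone h) {p r : ℝ} (hp : 1 ≤ p)
    (hr : 0 < r) :
    ∫⁻ ν in Ioi 0, h ν ^ p * ENNReal.ofReal (ν ^ (p * r - 1)) ≤
      ENNReal.ofReal r ^ (p - 1) * (∫⁻ ν in Ioi 0, h ν * ENNReal.ofReal (ν ^ (r - 1))) ^ p := by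
  set Φ := ∫⁻ ν in Ioi 0, h ν * ENNReal.ofReal (ν ^ (r - 1))
  have hp' : 0 ≤ p - 1 := sub_nonneg.mpr hp
  have hmeas : Measurable fun ν ↦ h ν * ENNReal.ofReal (ν ^ (r - 1)) :=
    hh.measurable.mul (by fun_prop)
  have hsplit {ν : ℝ} (hν : 0 < ν) : h ν ^ p * ENNReal.ofReal (ν ^ (p * r - 1)) =
      (h ν * ENNReal.ofReal (ν ^ r)) ^ (p - 1) * (h ν * ENNReal.ofReal (ν ^ (r - 1))) := by
    rw [ENNReal.mul_rpow_of_nonneg _ _ hp', ENNReal.ofReal_rpow_of_pos (by positivity),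
      ← Real.rpow_mul hν.le, mul_mul_mul_comm, ← ENNReal.ofReal_mul (by positivity),
      ← Real.rpow_add hν, ← sub_add_cancel p 1, ENNReal.rpow_add_of_nonneg _ _ hp' zero_le_one,
      ENNReal.rpow_one, sub_add_cancel]
    ring_nf
  calc _ ≤ ∫⁻ ν in Ioi 0, (ENNReal.ofReal r * Φ) ^ (p - 1) *
          (h ν * ENNReal.ofReal (ν ^ (r - 1))) := by
        refine setLIntegral_mono' measurableSet_Ioi fun ν (hν : 0 < ν) ↦ ?_
        rw [hsplit hν]
        gcongr ?_ ^ (p - 1) * _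
        exact mul_ofReal_rpow_le_lintegral_of_antitone hh hr hν.le
    _ = ENNReal.ofReal r ^ (p - 1) * (Φ ^ (p - 1) * Φ ^ (1 : ℝ)) := by
        rw [lintegral_const_mul _ hmeas, ENNReal.mul_rpow_of_nonneg _ _ hp', mul_assoc,
          ENNReal.rpow_one]
    _ = _ := by
        rw [← ENNReal.rpow_add_of_nonneg _ _ hp' zero_le_one, sub_add_cancel]

/-- The embedding of the Lorentz space `L^{pr,r}` into `L^{pr}`: the integral is a multiple of the
`r`-th power of the Lorentz norm. -/
lemma eLpNorm_rpow_le_lintegral_measure_lt_norm {α E : Type*} [MeasurableSpace α]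
    [NormedAddCommGroup E] {μ : Measure α} {f : α → E} (hf : AEStronglyMeasurable f μ) {p r : ℝ}
    (hp : 1 ≤ p) (hr : 0 < r) :
    eLpNorm f (ENNReal.ofReal (p * r)) μ ^ r ≤ ENNReal.ofReal (p * r ^ p) ^ (1 / p) *
      ∫⁻ ν in Ioi 0, μ {x | ν < ‖f x‖} ^ (1 / p) * ENNReal.ofReal (ν ^ (r - 1)) := by
  have hp0 : 0 < p := one_pos.trans_le hp
  have hpr : 0 < p * r := mul_pos hp0 hr
  set Φ := ∫⁻ ν in Ioi 0, μ {x | ν < ‖f x‖} ^ (1 / p) * ENNReal.ofReal (ν ^ (r - 1))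
  have hanti : Antitone fun ν : ℝ ↦ μ {x | ν < ‖f x‖} ^ (1 / p) := fun a b hab ↦
    ENNReal.rpow_le_rpow (measure_mono fun x (hx : b < ‖f x‖) ↦ hab.trans_lt hx) (by positivity)
  have hint : ∫⁻ x, ‖f x‖ₑ ^ (p * r) ∂μ ≤ ENNReal.ofReal (p * r ^ p) * Φ ^ p := by
    calc ∫⁻ x, ‖f x‖ₑ ^ (p * r) ∂μ = ∫⁻ x, ENNReal.ofReal (‖f x‖ ^ (p * r)) ∂μ := by
          simp only [← ofReal_norm, ENNReal.ofReal_rpow_of_nonneg (norm_nonneg _) hpr.le]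
      _ = ENNReal.ofReal (p * r) *
            ∫⁻ ν in Ioi 0, μ {x | ν < ‖f x‖} * ENNReal.ofReal (ν ^ (p * r - 1)) :=
          lintegral_rpow_eq_lintegral_meas_lt_mul μ (.of_forall fun x ↦ norm_nonneg _)
            hf.norm.aemeasurable hpr
      _ ≤ ENNReal.ofReal (p * r) * (ENNReal.ofReal r ^ (p - 1) * Φ ^ p) := by
          gcongr
          simpa only [← ENNReal.rpow_mul, one_div_mul_cancel hp0.ne', ENNReal.rpow_one] using
            lintegral_antitone_rpow_le hanti hp hr
      _ = ENNReal.ofReal (p * r ^ p) * Φ ^ p := by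
          rw [← mul_assoc, ENNReal.ofReal_rpow_of_pos hr, ← ENNReal.ofReal_mul hpr.le, mul_assoc,
            ← Real.rpow_one_add' hr.le (by linarith), add_sub_cancel]
  calc eLpNorm f (ENNReal.ofReal (p * r)) μ ^ r
      = (∫⁻ x, ‖f x‖ₑ ^ (p * r) ∂μ) ^ (1 / p) := by
        rw [eLpNorm_eq_lintegral_rpow_enorm_toReal (ENNReal.ofReal_pos.mpr hpr).ne'
          ENNReal.ofReal_ne_top, ENNReal.toReal_ofReal hpr.le, ← ENNReal.rpow_mul]
        congr 1
        field_simp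
    _ ≤ (ENNReal.ofReal (p * r ^ p) * Φ ^ p) ^ (1 / p) := by gcongr
    _ = _ := by
        rw [ENNReal.mul_rpow_of_nonneg _ _ (by positivity), ← ENNReal.rpow_mul,
          mul_one_div_cancel hp0.ne', ENNReal.rpow_one]

end LorentzEmbedding

section LowPart

variable {α : Type*} {r a μ : ℝ} {g : α → ℂ}

/-- The part of `g` below the level `(a / μ) ^ (r - 1)`. In the real interpolation of the dispersive
and endpoint estimates it carries the values of the evolution at height `μ`. -/
def lowPart (r a μ : ℝ) (g : α → ℂ) : α → ℂ := {x | μ * ‖g x‖ ^ (1 / (r - 1)) ≤ a}.indicator g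

lemma lowPart_of_le {x : α} (hx : μ * ‖g x‖ ^ (1 / (r - 1)) ≤ a) : lowPart r a μ g x = g x :=
  indicator_of_mem (s := {x | μ * ‖g x‖ ^ (1 / (r - 1)) ≤ a}) hx g

lemma lowPart_of_lt {x : α} (hx : a < μ * ‖g x‖ ^ (1 / (r - 1))) : lowPart r a μ g x = 0 :=
  indicator_of_notMem (s := {x | μ * ‖g x‖ ^ (1 / (r - 1)) ≤ a}) hx.not_ge g

lemma enorm_sub_lowPart_le (hr : 1 < r) (ha : 0 < a) (x : α) :
    ‖(g - lowPart r a μ g) x‖ₑ ≤ ENNReal.ofReal (μ / a) * ‖g x‖ₑ ^ (r / (r - 1)) := by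
  have hr' : 0 < r - 1 := sub_pos.mpr hr
  rw [Pi.sub_apply]
  rcases le_or_gt (μ * ‖g x‖ ^ (1 / (r - 1))) a with hx | hx
  · simp [lowPart_of_le hx]
  · rw [lowPart_of_lt hx, sub_zero, ← ofReal_norm,
      ENNReal.ofReal_rpow_of_nonneg (norm_nonneg _) (by positivity),
      ← ENNReal.ofReal_mul' (by positivity)]
    refine ENNReal.ofReal_le_ofReal ?_
    have hone : 1 ≤ μ / a * ‖g x‖ ^ (1 / (r - 1)) := by
      rw [div_mul_eq_mul_div]
      exact (one_le_div ha).mpr hx.le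
    calc ‖g x‖ ≤ μ / a * ‖g x‖ ^ (1 / (r - 1)) * ‖g x‖ :=
          le_mul_of_one_le_left (norm_nonneg _) hone
      _ = μ / a * ‖g x‖ ^ (r / (r - 1)) := by
          rw [mul_assoc, ← Real.rpow_add_one' (norm_nonneg _) (by positivity)]
          congr 2
          field_simp
          ring

lemma lintegral_enorm_lowPart_sq_le (hr : 2 < r) (ha : 0 ≤ a) (g : α → ℂ) (x : α) :
    ∫⁻ μ in Ioi 0, ‖lowPart r a μ g x‖ₑ ^ 2 * ENNReal.ofReal (μ ^ (r - 3)) ≤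
      ENNReal.ofReal (a ^ (r - 2) / (r - 2)) * ‖g x‖ₑ ^ (r / (r - 1)) := by
  have hr1 : 0 < r - 1 := by linarith
  rcases (norm_nonneg (g x)).eq_or_lt with hg | hg
  · simp [lowPart, indicator, norm_eq_zero.mp hg.symm]
  set b := a / ‖g x‖ ^ (1 / (r - 1))
  have hb : 0 ≤ b := by positivity
  calc _ ≤ ∫⁻ μ in Ioi 0, (Ioc 0 b).indicator
          (fun μ ↦ ‖g x‖ₑ ^ 2 * ENNReal.ofReal (μ ^ (r - 3))) μ := by
        refine setLIntegral_mono' measurableSet_Ioi fun μ (hμ : 0 < μ) ↦ ?_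
        rcases le_or_gt (μ * ‖g x‖ ^ (1 / (r - 1))) a with hx | hx
        · have hμb : μ ∈ Ioc 0 b := ⟨hμ, (le_div_iff₀ (by positivity)).mpr hx⟩
          rw [indicator_of_mem hμb, lowPart_of_le hx]
        · simp [lowPart_of_lt hx]
    _ ≤ ∫⁻ μ in Ioc 0 b, ‖g x‖ₑ ^ 2 * ENNReal.ofReal (μ ^ (r - 3)) := by
        rw [← lintegral_indicator measurableSet_Ioc]
        exact setLIntegral_le_lintegral _ _
    _ = ENNReal.ofReal (‖g x‖ ^ 2 * (b ^ (r - 2) / (r - 2))) := by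
        rw [lintegral_const_mul _ (by fun_prop), lintegral_Ioc_rpow (by linarith) hb, ← ofReal_norm,
          ← ENNReal.ofReal_pow (norm_nonneg _), ← ENNReal.ofReal_mul (by positivity)]
        ring_nf
    _ = _ := by
        rw [← ofReal_norm, ENNReal.ofReal_rpow_of_pos hg, ← ENNReal.ofReal_mul (by positivity),
          Real.div_rpow ha (by positivity), ← Real.rpow_mul hg.le,
          show r / (r - 1) = 2 - 1 / (r - 1) * (r - 2) by field_simp; ring, Real.rpow_sub hg,
          Real.rpow_two]
        ring_nf

variable [MeasurableSpace α]

lemma measurable_uncurry_lowPart (r a : ℝ) (hg : Measurable g) :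
    Measurable fun p : ℝ × α ↦ lowPart r a p.1 g p.2 :=
  (hg.comp measurable_snd).indicator <| measurableSet_le
    (measurable_fst.mul ((hg.comp measurable_snd).norm.pow_const _)) measurable_const

lemma integrable_lowPart {ρ : Measure α} (r a μ : ℝ) (hg : Measurable g) (hgi : Integrable g ρ) :
    Integrable (lowPart r a μ g) ρ :=
  hgi.indicator (measurableSet_le (measurable_const.mul (hg.norm.pow_const _)) measurable_const)

end LowPart

section RealInterpolation

variable {V : Type*} [NormedAddCommGroup V] [InnerProductSpace ℝ V] [FiniteDimensional ℝ V]
  [MeasurableSpace V] [BorelSpace V] {d : ℕ}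

lemma integrable_schrodKernel_mul (d : ℕ) {τ : ℝ} (hτ : τ ≠ 0) {g : V → ℂ} (hg : Integrable g)
    (x : V) : Integrable fun y ↦ schrodKernel d τ x y * g y :=
  hg.bdd_mul (Measurable.aestronglyMeasurable (by fun_prop))
    (.of_forall fun y ↦ norm_schrodKernel_le d (abs_pos.mpr hτ) le_rfl x y)

lemma schrod_sub (d : ℕ) {τ : ℝ} (hτ : τ ≠ 0) {f g : V → ℂ} (hf : Integrable f)
    (hg : Integrable g) : schrod d τ (f - g) = schrod d τ f - schrod d τ g := by
  ext x
  simp only [schrod_apply d hτ, Pi.sub_apply, mul_sub]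
  exact integral_sub (integrable_schrodKernel_mul d hτ hf x) (integrable_schrodKernel_mul d hτ hg x)

lemma enorm_schrod_sub_lowPart_le {δ τ r a μ : ℝ} (hδ : 0 < δ) (hτ : δ ≤ |τ|) (hr : 1 < r)
    (ha : 0 < a) {g : V → ℂ}
    (hga : 2 * ENNReal.ofReal ((4 * π * δ) ^ (-(d : ℝ) / 2)) * ∫⁻ x, ‖g x‖ₑ ^ (r / (r - 1)) ≤
      ENNReal.ofReal a) (x : V) :
    ‖schrod d τ (g - lowPart r a μ g) x‖ₑ ≤ ENNReal.ofReal (μ / 2) := by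
  set D := ENNReal.ofReal ((4 * π * δ) ^ (-(d : ℝ) / 2))
  calc _ ≤ D * ∫⁻ y, ‖(g - lowPart r a μ g) y‖ₑ := enorm_schrod_le d hδ hτ _ x
    _ ≤ D * ∫⁻ y, ENNReal.ofReal (μ / a) * ‖g y‖ₑ ^ (r / (r - 1)) := by
        gcongr with y
        exact enorm_sub_lowPart_le hr ha y
    _ = ENNReal.ofReal (μ / a) / 2 * (2 * D * ∫⁻ y, ‖g y‖ₑ ^ (r / (r - 1))) := by
        rw [lintegral_const_mul' _ _ ENNReal.ofReal_ne_top, mul_assoc 2,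
          ← mul_assoc (_ / 2), ENNReal.div_mul_cancel two_ne_zero ENNReal.ofNat_ne_top,
          mul_left_comm]
    _ ≤ ENNReal.ofReal (μ / a) / 2 * ENNReal.ofReal a := by gcongr
    _ = ENNReal.ofReal (μ / 2) := by
        rw [← ENNReal.ofReal_ofNat 2, ← ENNReal.ofReal_div_of_pos two_pos,
          ← ENNReal.ofReal_mul' ha.le]
        congr 1
        field_simp

lemma measure_lt_norm_schrod_le_lowPart {δ τ r a μ : ℝ} (hδ : 0 < δ) (hτ : δ ≤ |τ|) (hr : 1 < r)
    (ha : 0 < a) (hμ : 0 ≤ μ) {g : V → ℂ} (hg : Measurable g) (hgi : Integrable g)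
    (hga : 2 * ENNReal.ofReal ((4 * π * δ) ^ (-(d : ℝ) / 2)) * ∫⁻ x, ‖g x‖ₑ ^ (r / (r - 1)) ≤
      ENNReal.ofReal a) :
    volume {x | μ < ‖schrod d τ g x‖} ≤ volume {x | μ / 2 < ‖schrod d τ (lowPart r a μ g) x‖} := by
  refine measure_mono fun x (hx : μ < ‖schrod d τ g x‖) ↦ ?_
  have hτ0 : τ ≠ 0 := abs_pos.mp (hδ.trans_le hτ)
  have hhigh := enorm_schrod_sub_lowPart_le (μ := μ) hδ hτ hr ha hga x
  rw [← ofReal_norm, ENNReal.ofReal_le_ofReal_iff (by positivity),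
    schrod_sub d hτ0 hgi (integrable_lowPart r a μ hg hgi), Pi.sub_apply] at hhigh
  have htri := norm_le_norm_add_norm_sub' (schrod d τ g x) (schrod d τ (lowPart r a μ g) x)
  rw [mem_ofPred_eq]
  linarith

lemma lintegral_measure_lt_norm_schrod_rpow_mul_le (hV : Module.finrank ℝ V = d) (hd : 3 ≤ d)
    {δ r a μ : ℝ} (hδ : 0 < δ) (hr : 1 < r) (ha : 0 < a) (hμ : 0 < μ) {J : Set ℝ}
    (hJ : MeasurableSet J) (hJ_fin : volume J ≠ ∞) (hJδ : ∀ τ ∈ J, δ ≤ |τ|) {g : V → ℂ}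
    (hg : Measurable g) (hgi : Integrable g)
    (hga : 2 * ENNReal.ofReal ((4 * π * δ) ^ (-(d : ℝ) / 2)) * ∫⁻ x, ‖g x‖ₑ ^ (r / (r - 1)) ≤
      ENNReal.ofReal a) :
    ∫⁻ τ in J, volume {x | μ < ‖schrod d τ g x‖} ^ (((d : ℝ) - 2) / d) *
        ENNReal.ofReal (μ ^ (r - 1)) ≤
      ENNReal.ofReal (32 * ((d : ℝ) - 1) / ((d : ℝ) - 2)) *
        ∫⁻ x, ‖lowPart r a μ g x‖ₑ ^ 2 * ENNReal.ofReal (μ ^ (r - 3)) := by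
  have hd' : (2 : ℝ) < d := mod_cast hd
  have hlow : Measurable (lowPart r a μ g) :=
    (measurable_uncurry_lowPart r a hg).comp measurable_prodMk_left
  have hweight : ENNReal.ofReal (μ ^ (r - 1)) =
      ENNReal.ofReal (4 * μ ^ (r - 3)) * ENNReal.ofReal (μ / 2) ^ 2 := by
    rw [← ENNReal.ofReal_pow (by positivity), ← ENNReal.ofReal_mul (by positivity),
      show r - 1 = r - 3 + (2 : ℕ) by push_cast; ring, Real.rpow_add_natCast hμ.ne']
    ring_nf
  calc _ ≤ ∫⁻ τ in J, ENNReal.ofReal (μ ^ (r - 1)) *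
          volume {x | μ / 2 < ‖schrod d τ (lowPart r a μ g) x‖} ^ (((d : ℝ) - 2) / d) := by
        refine setLIntegral_mono' hJ fun τ hτ ↦ ?_
        rw [mul_comm]
        gcongr _ * ?_ ^ _
        exact measure_lt_norm_schrod_le_lowPart hδ (hJδ τ hτ) hr ha hμ.le hg hgi hga
    _ ≤ ENNReal.ofReal (4 * μ ^ (r - 3)) * (ENNReal.ofReal (8 * ((d : ℝ) - 1) / ((d : ℝ) - 2)) *
          ∫⁻ x, ‖lowPart r a μ g x‖ₑ ^ 2) := by
        rw [lintegral_const_mul' _ _ ENNReal.ofReal_ne_top, hweight, mul_assoc]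
        gcongr _ * ?_
        exact lintegral_measure_lt_norm_schrod_rpow_le hV hd hδ (by positivity) hJ hJ_fin hJδ hlow
          (integrable_lowPart r a μ hg hgi)
    _ = _ := by
        rw [lintegral_mul_const' _ _ ENNReal.ofReal_ne_top, mul_comm (∫⁻ x, _), ← mul_assoc,
          ← mul_assoc, ← ENNReal.ofReal_mul (by positivity),
          ← ENNReal.ofReal_mul (div_nonneg (by linarith) (by linarith))]
        ring_nf

end RealInterpolation

section DiagonalStrichartz

variable {V : Type*} [NormedAddCommGroup V] [InnerProductSpace ℝ V] [FiniteDimensional ℝ V]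
  [MeasurableSpace V] [BorelSpace V] {d : ℕ}

lemma lintegral_lintegral_measure_lt_norm_schrod_le (hV : Module.finrank ℝ V = d) (hd : 3 ≤ d)
    {δ r a : ℝ} (hδ : 0 < δ) (hr : 2 < r) (ha : 0 < a) {J : Set ℝ} (hJ : MeasurableSet J)
    (hJ_fin : volume J ≠ ∞) (hJδ : ∀ τ ∈ J, δ ≤ |τ|) {g : V → ℂ} (hg : Measurable g)
    (hgi : Integrable g)
    (hga : 2 * ENNReal.ofReal ((4 * π * δ) ^ (-(d : ℝ) / 2)) * ∫⁻ x, ‖g x‖ₑ ^ (r / (r - 1)) ≤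
      ENNReal.ofReal a) :
    ∫⁻ τ in J, ∫⁻ μ in Ioi 0, volume {x | μ < ‖schrod d τ g x‖} ^ (((d : ℝ) - 2) / d) *
        ENNReal.ofReal (μ ^ (r - 1)) ≤
      ENNReal.ofReal (32 * ((d : ℝ) - 1) / ((d : ℝ) - 2)) *
        (ENNReal.ofReal (a ^ (r - 2) / (r - 2)) * ∫⁻ x, ‖g x‖ₑ ^ (r / (r - 1))) := by
  have hlevel : Measurable fun p : ℝ × ℝ ↦ volume {x | p.2 < ‖schrod d p.1 g x‖} :=
    measurable_measure_prodMk_left <| measurableSet_lt (measurable_snd.comp measurable_fst)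
      (measurable_schrod d (φ := fun _ ↦ g) (measurable_fst.comp measurable_fst)
        (hg.comp measurable_snd) measurable_snd).norm
  have hlow : Measurable fun p : ℝ × V ↦
      ‖lowPart r a p.1 g p.2‖ₑ ^ 2 * ENNReal.ofReal (p.1 ^ (r - 3)) :=
    ((measurable_uncurry_lowPart r a hg).enorm.pow_const 2).mul (by fun_prop)
  rw [lintegral_lintegral_swap (by fun_prop)]
  calc _ ≤ ∫⁻ μ in Ioi 0, ENNReal.ofReal (32 * ((d : ℝ) - 1) / ((d : ℝ) - 2)) *
          ∫⁻ x, ‖lowPart r a μ g x‖ₑ ^ 2 * ENNReal.ofReal (μ ^ (r - 3)) :=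
        setLIntegral_mono' measurableSet_Ioi fun μ hμ ↦
          lintegral_measure_lt_norm_schrod_rpow_mul_le hV hd hδ (by linarith) ha hμ hJ hJ_fin hJδ
            hg hgi hga
    _ ≤ _ := by
        rw [lintegral_const_mul' _ _ ENNReal.ofReal_ne_top,
          lintegral_lintegral_swap hlow.aemeasurable]
        gcongr _ * ?_
        rw [← lintegral_const_mul' _ _ ENNReal.ofReal_ne_top]
        exact lintegral_mono fun x ↦ lintegral_enorm_lowPart_sq_le hr ha.le g x

lemma lintegral_eLpNorm_schrod_rpow_le_of_le (hV : Module.finrank ℝ V = d) (hd : 3 ≤ d)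
    {δ r a : ℝ} (hδ : 0 < δ) (hr : 2 < r) (ha : 0 < a) {J : Set ℝ} (hJ : MeasurableSet J)
    (hJ_fin : volume J ≠ ∞) (hJδ : ∀ τ ∈ J, δ ≤ |τ|) {g : V → ℂ} (hg : Measurable g)
    (hgi : Integrable g)
    (hga : 2 * ENNReal.ofReal ((4 * π * δ) ^ (-(d : ℝ) / 2)) * ∫⁻ x, ‖g x‖ₑ ^ (r / (r - 1)) ≤
      ENNReal.ofReal a) :
    ∫⁻ τ in J, eLpNorm (schrod d τ g) (ENNReal.ofReal (d / (d - 2) * r)) volume ^ r ≤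
      ENNReal.ofReal (d / (d - 2) * r ^ ((d : ℝ) / (d - 2))) ^ (((d : ℝ) - 2) / d) *
        (ENNReal.ofReal (32 * ((d : ℝ) - 1) / ((d : ℝ) - 2)) *
          (ENNReal.ofReal (a ^ (r - 2) / (r - 2)) * ∫⁻ x, ‖g x‖ₑ ^ (r / (r - 1)))) := by
  have hd' : (2 : ℝ) < d := mod_cast hd
  have hp : 1 ≤ (d : ℝ) / (d - 2) := (one_le_div (by linarith)).mpr (by linarith)
  refine le_trans ?_ (mul_le_mul_right
    (lintegral_lintegral_measure_lt_norm_schrod_le hV hd hδ hr ha hJ hJ_fin hJδ hg hgi hga) _)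
  rw [← lintegral_const_mul' _ _ (by finiteness)]
  gcongr with τ
  simpa only [one_div_div] using eLpNorm_rpow_le_lintegral_measure_lt_norm
    (measurable_schrod_const d τ hg).aestronglyMeasurable hp (by linarith : 0 < r)

lemma lintegral_eLpNorm_schrod_rpow_le (hV : Module.finrank ℝ V = d) (hd : 3 ≤ d)
    {δ r : ℝ} (hδ : 0 < δ) (hr : 2 < r) {J : Set ℝ} (hJ : MeasurableSet J)
    (hJ_fin : volume J ≠ ∞) (hJδ : ∀ τ ∈ J, δ ≤ |τ|) {g : V → ℂ} (hg : Measurable g)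
    (hgi : Integrable g) :
    ∫⁻ τ in J, eLpNorm (schrod d τ g) (ENNReal.ofReal (d / (d - 2) * r)) volume ^ r ≤
      ENNReal.ofReal (d / (d - 2) * r ^ ((d : ℝ) / (d - 2))) ^ (((d : ℝ) - 2) / d) *
        (ENNReal.ofReal (32 * ((d : ℝ) - 1) / ((d : ℝ) - 2)) *
          (ENNReal.ofReal ((2 * (4 * π * δ) ^ (-(d : ℝ) / 2)) ^ (r - 2) / (r - 2)) *
            (∫⁻ x, ‖g x‖ₑ ^ (r / (r - 1))) ^ (r - 1))) := by
  have hd' : (2 : ℝ) < d := mod_cast hd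
  have hd2 : 0 < (d : ℝ) - 2 := sub_pos.mpr hd'
  have hr1 : 0 < r - 1 := by linarith
  set M := 2 * (4 * π * δ) ^ (-(d : ℝ) / 2) with hM_def
  have hM : 0 < M := by positivity
  set X := ∫⁻ x, ‖g x‖ₑ ^ (r / (r - 1)) with hX_def
  have hbound {a : ℝ} (ha : 0 < a) (hMX : ENNReal.ofReal M * X ≤ ENNReal.ofReal a) :=
    lintegral_eLpNorm_schrod_rpow_le_of_le hV hd hδ hr ha hJ hJ_fin hJδ hg hgi
      (by rwa [hM_def, ENNReal.ofReal_mul zero_le_two, ENNReal.ofReal_ofNat] at hMX)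
  rw [← hX_def] at hbound
  rcases eq_or_ne X 0 with hX0 | hX0
  · simpa only [hX0, mul_zero, ENNReal.zero_rpow_of_pos hr1] using
      hbound one_pos (by simp only [hX0, mul_zero, zero_le])
  rcases eq_or_ne X ∞ with hX_top | hX_top
  · have hK₂ : 0 < 32 * ((d : ℝ) - 1) / ((d : ℝ) - 2) := div_pos (by linarith) hd2
    rw [hX_top, ENNReal.top_rpow_of_pos hr1, ENNReal.mul_top, ENNReal.mul_top, ENNReal.mul_top]
    · exact le_top
    · exact (ENNReal.rpow_pos (ENNReal.ofReal_pos.mpr (by positivity)) ENNReal.ofReal_ne_top).ne'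
    · exact (ENNReal.ofReal_pos.mpr hK₂).ne'
    · exact (ENNReal.ofReal_pos.mpr (by positivity)).ne'
  have hX : 0 < X.toReal := ENNReal.toReal_pos hX0 hX_top
  refine (hbound (mul_pos hM hX) ?_).trans_eq ?_
  · rw [ENNReal.ofReal_mul hM.le, ENNReal.ofReal_toReal hX_top]
  · congr 2
    rw [Real.mul_rpow hM.le hX.le, mul_div_right_comm, ENNReal.ofReal_mul (by positivity),
      mul_assoc, ← ENNReal.ofReal_rpow_of_pos hX, ENNReal.ofReal_toReal hX_top,
      show r - 1 = r - 2 + 1 by ring, ENNReal.rpow_add _ _ hX0 hX_top, ENNReal.rpow_one]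

lemma exists_lintegral_eLpNorm_schrod_rpow_le (hV : Module.finrank ℝ V = d) (hd : 3 ≤ d) {r : ℝ}
    (hr : 2 < r) :
    ∃ C : ℝ, 0 < C ∧ ∀ δ : ℝ, 0 < δ → ∀ J : Set ℝ, MeasurableSet J → volume J ≠ ∞ →
      (∀ τ ∈ J, δ ≤ |τ|) → ∀ g : V → ℂ, Measurable g → Integrable g →
        ∫⁻ τ in J, eLpNorm (schrod d τ g) (ENNReal.ofReal (d / (d - 2) * r)) volume ^ r ≤
          ENNReal.ofReal (C * δ ^ (-(d : ℝ) / 2 * (r - 2))) *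
            eLpNorm g (ENNReal.ofReal (r / (r - 1))) volume ^ r := by
  have hd' : (2 : ℝ) < d := mod_cast hd
  have hd2 : 0 < (d : ℝ) - 2 := sub_pos.mpr hd'
  have hr1 : 0 < r - 1 := by linarith
  set K₁ := ((d : ℝ) / (d - 2) * r ^ ((d : ℝ) / (d - 2)))
  have hK₁ : 0 < K₁ := by positivity
  have hK₂ : 0 < 32 * ((d : ℝ) - 1) / ((d : ℝ) - 2) := div_pos (by linarith) hd2
  set D := (2 * (4 * π) ^ (-(d : ℝ) / 2)) ^ (r - 2) / (r - 2) with hD_def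
  refine ⟨K₁ ^ (((d : ℝ) - 2) / d) * (32 * ((d : ℝ) - 1) / ((d : ℝ) - 2) * D), by positivity,
    fun δ hδ J hJ hJ_fin hJδ g hg hgi ↦
      (lintegral_eLpNorm_schrod_rpow_le hV hd hδ hr hJ hJ_fin hJδ hg hgi).trans_eq ?_⟩
  have hδ_pow : (2 * (4 * π * δ) ^ (-(d : ℝ) / 2)) ^ (r - 2) / (r - 2) =
      D * δ ^ (-(d : ℝ) / 2 * (r - 2)) := by
    rw [hD_def, Real.rpow_mul hδ.le, div_mul_eq_mul_div, ← Real.mul_rpow (by positivity)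
      (by positivity), mul_assoc 2, ← Real.mul_rpow (by positivity) hδ.le]
  have hg_norm : eLpNorm g (ENNReal.ofReal (r / (r - 1))) volume ^ r =
      (∫⁻ x, ‖g x‖ₑ ^ (r / (r - 1))) ^ (r - 1) := by
    have hk : 0 < r / (r - 1) := by positivity
    rw [eLpNorm_eq_lintegral_rpow_enorm_toReal (ENNReal.ofReal_pos.mpr hk).ne'
      ENNReal.ofReal_ne_top, ENNReal.toReal_ofReal hk.le, ← ENNReal.rpow_mul]
    congr 1
    field_simp
  rw [hδ_pow, hg_norm, ENNReal.ofReal_rpow_of_pos hK₁, ← mul_assoc, ← mul_assoc,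
    ← ENNReal.ofReal_mul (by positivity), ← ENNReal.ofReal_mul (by positivity)]
  congr 2
  ring

end DiagonalStrichartz

section ConverseHolder

open ComplexConjugate

variable {α : Type*} [MeasurableSpace α] {μ : Measure α} {f : α → ℂ} {p q : ℝ} {Q : ℝ≥0∞}

/-- The conjugate power `|z|^{p-2} z̄`, which pairs with `z` to `|z|^p`: it turns a function of
`L^p` into its norming function in the dual space. -/
def conjPow (p : ℝ) (z : ℂ) : ℂ := ((‖z‖ ^ (p - 2) : ℝ) : ℂ) * conj z

lemma conjPow_mul_self (hp : p ≠ 0) (z : ℂ) : conjPow p z * z = ((‖z‖ ^ p : ℝ) : ℂ) := by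
  rw [conjPow, mul_assoc, Complex.conj_mul', ← Complex.ofReal_pow, ← Complex.ofReal_mul,
    ← Real.rpow_natCast, ← Real.rpow_add' (norm_nonneg z) (by simpa using hp)]
  norm_num

lemma enorm_conjPow (hp : 1 < p) (z : ℂ) : ‖conjPow p z‖ₑ = ‖z‖ₑ ^ (p - 1) := by
  rw [← ofReal_norm, ← ofReal_norm, ENNReal.ofReal_rpow_of_nonneg (norm_nonneg z) (by linarith),
    conjPow, norm_mul, RCLike.norm_conj, Complex.norm_real, Real.norm_of_nonneg (by positivity),
    ← Real.rpow_add_one' (norm_nonneg z) (by linarith)]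
  ring_nf

lemma measurable_conjPow (p : ℝ) : Measurable (conjPow p) := by
  unfold conjPow
  fun_prop

lemma lintegral_enorm_indicator_rpow_ne_top {A : Set α} (hA : MeasurableSet A) (hμA : μ A ≠ ∞)
    {M : ℝ} (hM : ∀ x ∈ A, ‖f x‖ ≤ M) {s : ℝ} (hs : 0 < s) :
    ∫⁻ x, ‖A.indicator f x‖ₑ ^ s ∂μ ≠ ∞ := by
  have hle : ∫⁻ x, ‖A.indicator f x‖ₑ ^ s ∂μ ≤
      ∫⁻ x, A.indicator (fun _ ↦ ENNReal.ofReal M ^ s) x ∂μ := by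
    refine lintegral_mono fun x ↦ ?_
    by_cases hx : x ∈ A
    · simp only [indicator_of_mem hx]
      gcongr
      rw [← ofReal_norm]
      exact ENNReal.ofReal_le_ofReal (hM x hx)
    · simp [hx, hs]
  rw [lintegral_indicator_const hA] at hle
  exact ne_top_of_le_ne_top (by finiteness) hle

lemma eLpNorm_indicator_le_of_enorm_integral_mul_le (hf : Measurable f) (hpq : p.HolderConjugate q)
    (h : ∀ g, Measurable g → Integrable g μ →
      ‖∫ x, g x * f x ∂μ‖ₑ ≤ Q * eLpNorm g (ENNReal.ofReal q) μ)
    {A : Set α} (hA : MeasurableSet A) (hμA : μ A ≠ ∞) {M : ℝ} (hM : ∀ x ∈ A, ‖f x‖ ≤ M) :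
    eLpNorm (A.indicator f) (ENNReal.ofReal p) μ ≤ Q := by
  have hp := hpq.lt
  set F := A.indicator f with hF
  set N := ∫⁻ x, ‖F x‖ₑ ^ p ∂μ with hN
  have hFm : Measurable F := hf.indicator hA
  have hNtop : N ≠ ∞ := lintegral_enorm_indicator_rpow_ne_top hA hμA hM hpq.pos
  have hgm : Measurable fun x ↦ conjPow p (F x) := (measurable_conjPow p).comp hFm
  have hgi : Integrable (fun x ↦ conjPow p (F x)) μ := by
    refine ⟨hgm.aestronglyMeasurable, ?_⟩
    simp only [hasFiniteIntegral_iff_enorm, enorm_conjPow hp]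
    exact (lintegral_enorm_indicator_rpow_ne_top hA hμA hM (by linarith)).lt_top
  have hpair : ‖∫ x, conjPow p (F x) * f x ∂μ‖ₑ = N := by
    have hcongr (x : α) : conjPow p (F x) * f x = ((‖F x‖ ^ p : ℝ) : ℂ) := by
      rw [← conjPow_mul_self hpq.ne_zero]
      by_cases hx : x ∈ A <;> simp [hF, hx, conjPow]
    simp only [hcongr]
    rw [integral_complex_ofReal, ← ofReal_norm, Complex.norm_real,
      Real.norm_of_nonneg (by positivity), integral_eq_lintegral_of_nonneg_ae
        (.of_forall fun x ↦ by positivity) (hFm.norm.pow_const p).aestronglyMeasurable]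
    simp only [← ENNReal.ofReal_rpow_of_nonneg (norm_nonneg _) hpq.nonneg, ofReal_norm]
    exact ENNReal.ofReal_toReal hNtop
  have hdual : eLpNorm (fun x ↦ conjPow p (F x)) (ENNReal.ofReal q) μ = N ^ (1 / q) := by
    rw [eLpNorm_eq_lintegral_rpow_enorm_toReal (by simpa using hpq.symm.pos) (by simp),
      ENNReal.toReal_ofReal hpq.symm.nonneg]
    simp only [enorm_conjPow hp, ← ENNReal.rpow_mul, hpq.sub_one_mul_conj, hN]
  have hle : N ≤ Q * N ^ (1 / q) := by
    rw [← hdual]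
    exact hpair.symm.trans_le (h _ hgm hgi)
  rw [eLpNorm_eq_lintegral_rpow_enorm_toReal (by simpa using hpq.pos) (by simp),
    ENNReal.toReal_ofReal hpq.nonneg, ← hN]
  rcases eq_or_ne N 0 with h0 | h0
  · simp [h0, hpq.pos]
  refine (ENNReal.mul_le_mul_iff_left (c := N ^ (1 / q)) (by simp [h0, hNtop])
    (by finiteness)).mp (hle.trans' (le_of_eq ?_))
  rw [← ENNReal.rpow_add _ _ h0 hNtop]
  simp [hpq.inv_add_inv_eq_one]

lemma eLpNorm_le_of_enorm_integral_mul_le [SigmaFinite μ] (hf : Measurable f)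
    (hpq : p.HolderConjugate q)
    (h : ∀ g, Measurable g → Integrable g μ →
      ‖∫ x, g x * f x ∂μ‖ₑ ≤ Q * eLpNorm g (ENNReal.ofReal q) μ) :
    eLpNorm f (ENNReal.ofReal p) μ ≤ Q := by
  let A (n : ℕ) : Set α := spanningSets μ n ∩ {x | ‖f x‖ ≤ n}
  have hA (n : ℕ) : MeasurableSet (A n) :=
    (measurableSet_spanningSets μ n).inter (measurableSet_le hf.norm measurable_const)
  refine Lp.eLpNorm_le_of_ae_tendsto (u := Filter.atTop) (f := fun n ↦ (A n).indicator f)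
    (.of_forall fun n ↦ ?_) (fun n ↦ (hf.indicator (hA n)).aestronglyMeasurable)
    (.of_forall fun x ↦ ?_)
  · exact eLpNorm_indicator_le_of_enorm_integral_mul_le hf hpq h (hA n)
      (measure_inter_lt_top_of_left_ne_top (measure_spanningSets_lt_top μ n).ne).ne
      (fun x hx ↦ hx.2)
  · obtain ⟨m, hm⟩ := exists_nat_ge ‖f x‖
    refine tendsto_const_nhds.congr' ?_
    filter_upwards [Filter.eventually_ge_atTop (max m (spanningSetsIndex μ x))] with n hn
    refine (indicator_of_mem (show x ∈ A n from ⟨?_, ?_⟩) f).symm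
    · exact monotone_spanningSets μ (le_of_max_le_right hn) (mem_spanningSetsIndex μ x)
    · exact hm.trans (by exact_mod_cast le_of_max_le_left hn)

end ConverseHolder

section MixedNorm

variable {α : Type*} [MeasurableSpace α] {μ : Measure α} {I J : Set ℝ} {u : ℝ → α → ℂ}

lemma mixedNorm_top (q : ℝ≥0∞) :
    mixedNorm μ I ∞ q u = essSup (fun t ↦ eLpNorm (u t) q μ) (volume.restrict I) := if_pos rfl

lemma mixedNorm_ofReal {p : ℝ} (hp : 0 ≤ p) (q : ℝ≥0∞) :
    mixedNorm μ I (ENNReal.ofReal p) q u = (∫⁻ t in I, eLpNorm (u t) q μ ^ p) ^ (1 / p) := by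
  rw [mixedNorm, if_neg ENNReal.ofReal_ne_top, ENNReal.toReal_ofReal hp]

lemma mixedNorm_ofReal_mono {p : ℝ} (hp : 0 ≤ p) (q : ℝ≥0∞) (hIJ : I ⊆ J) :
    mixedNorm μ I (ENNReal.ofReal p) q u ≤ mixedNorm μ J (ENNReal.ofReal p) q u := by
  rw [mixedNorm_ofReal hp, mixedNorm_ofReal hp]
  exact ENNReal.rpow_le_rpow (lintegral_mono_set hIJ) (by positivity)

lemma measurable_eLpNorm_uncurry [SFinite μ] (hu : Measurable (Function.uncurry u)) {q : ℝ}
    (hq : 0 < q) : Measurable fun t ↦ eLpNorm (u t) (ENNReal.ofReal q) μ := by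
  simp only [eLpNorm_eq_lintegral_rpow_enorm_toReal (ENNReal.ofReal_pos.mpr hq).ne'
    ENNReal.ofReal_ne_top]
  exact (Measurable.lintegral_prod_right' (f := fun z : ℝ × α ↦ _)
    (hu.enorm.pow_const _)).pow_const _

lemma lintegral_mul_le_eLpNorm_mul_eLpNorm {f g : α → ℂ} (hf : Measurable f) (hg : Measurable g)
    {q q' : ℝ} (hq : q.HolderConjugate q') :
    ∫⁻ x, ‖f x‖ₑ * ‖g x‖ₑ ∂μ ≤
      eLpNorm f (ENNReal.ofReal q) μ * eLpNorm g (ENNReal.ofReal q') μ := by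
  rw [eLpNorm_eq_lintegral_rpow_enorm_toReal (by simpa using hq.pos) (by simp),
    eLpNorm_eq_lintegral_rpow_enorm_toReal (by simpa using hq.symm.pos) (by simp),
    ENNReal.toReal_ofReal hq.nonneg, ENNReal.toReal_ofReal hq.symm.nonneg]
  exact ENNReal.lintegral_mul_le_Lp_mul_Lq μ hq hf.enorm.aemeasurable hg.enorm.aemeasurable

lemma enorm_integral_mul_le_mixedNorm_mul_mixedNorm [SFinite μ] {w : ℝ → α → ℂ}
    (hu : Measurable (Function.uncurry u)) (hw : Measurable (Function.uncurry w))
    {p p' q q' : ℝ} (hp : p.HolderConjugate p') (hq : q.HolderConjugate q') :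
    ‖∫ z, u z.1 z.2 * w z.1 z.2 ∂((volume.restrict I).prod μ)‖ₑ ≤
      mixedNorm μ I (ENNReal.ofReal p) (ENNReal.ofReal q) u *
        mixedNorm μ I (ENNReal.ofReal p') (ENNReal.ofReal q') w := by
  rw [mixedNorm_ofReal hp.nonneg, mixedNorm_ofReal hp.symm.nonneg]
  calc _ ≤ ∫⁻ z, ‖u z.1 z.2‖ₑ * ‖w z.1 z.2‖ₑ ∂((volume.restrict I).prod μ) := by
        simpa only [enorm_mul] using enorm_integral_le_lintegral_enorm
          (fun z : ℝ × α ↦ u z.1 z.2 * w z.1 z.2)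
    _ = ∫⁻ t in I, ∫⁻ x, ‖u t x‖ₑ * ‖w t x‖ₑ ∂μ :=
        lintegral_prod _ (hu.enorm.mul hw.enorm).aemeasurable
    _ ≤ ∫⁻ t in I, eLpNorm (u t) (ENNReal.ofReal q) μ * eLpNorm (w t) (ENNReal.ofReal q') μ :=
        lintegral_mono fun t ↦
          lintegral_mul_le_eLpNorm_mul_eLpNorm hu.of_uncurry_left hw.of_uncurry_left hq
    _ ≤ _ := ENNReal.lintegral_mul_le_Lp_mul_Lq _ hp
        (measurable_eLpNorm_uncurry hu hq.pos).aemeasurable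
        (measurable_eLpNorm_uncurry hw hq.symm.pos).aemeasurable

end MixedNorm

section Duhamel

variable {V : Type*} [NormedAddCommGroup V] [InnerProductSpace ℝ V] [FiniteDimensional ℝ V]
  [MeasurableSpace V] [BorelSpace V] {d : ℕ}

lemma exists_mixedNorm_schrod_sub_le (hV : Module.finrank ℝ V = d) (hd : 3 ≤ d) {r : ℝ}
    (hr : 2 < r) :
    ∃ C : ℝ, 0 < C ∧ ∀ δ : ℝ, 0 < δ → ∀ t : ℝ, ∀ I : Set ℝ, MeasurableSet I → volume I ≠ ∞ →
      (∀ s ∈ I, δ ≤ |t - s|) → ∀ g : V → ℂ, Measurable g → Integrable g →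
        mixedNorm volume I (ENNReal.ofReal r) (ENNReal.ofReal (d / (d - 2) * r))
            (fun s ↦ schrod d (t - s) g) ≤
          ENNReal.ofReal (C * δ ^ (-(d * (1 / 2 - 1 / r)))) *
            eLpNorm g (ENNReal.ofReal (r / (r - 1))) volume := by
  obtain ⟨C, hC, hbound⟩ := exists_lintegral_eLpNorm_schrod_rpow_le hV hd hr
  have hr0 : 0 < r := by linarith
  refine ⟨C ^ (1 / r), by positivity, fun δ hδ t I hI hI_fin hIδ g hg hgi ↦ ?_⟩
  have hmp : MeasurePreserving (t - ·) volume volume := volume.measurePreserving_sub_left t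
  have hemb : MeasurableEmbedding (t - · : ℝ → ℝ) := (MeasurableEquiv.subLeft t).measurableEmbedding
  have hsub := hmp.setLIntegral_comp_preimage_emb hemb
    (fun s ↦ eLpNorm (schrod d (t - s) g) (ENNReal.ofReal (d / (d - 2) * r)) volume ^ r) I
  simp only [sub_sub_cancel] at hsub
  rw [mixedNorm_ofReal hr0.le, ← hsub, one_div, ENNReal.rpow_inv_le_iff hr0]
  refine (hbound δ hδ _ (hI.preimage hmp.measurable) (by rwa [hmp.measure_preimage_emb hemb])
    (fun τ hτ ↦ by simpa using hIδ _ hτ) g hg hgi).trans_eq ?_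
  rw [ENNReal.mul_rpow_of_nonneg _ _ hr0.le, ENNReal.ofReal_rpow_of_nonneg (by positivity) hr0.le,
    Real.mul_rpow (by positivity) (by positivity), ← Real.rpow_mul hC.le, ← Real.rpow_mul hδ.le,
    inv_mul_cancel₀ hr0.ne', Real.rpow_one]
  congr 4
  field_simp

variable {δ t r r' q q' : ℝ} {I : Set ℝ} {F : ℝ → V → ℂ} {Q : ℝ≥0∞}

lemma measurable_schrod_sub (hF : Measurable (Function.uncurry F)) :
    Measurable fun z : V × ℝ ↦ schrod d (t - z.2) (F z.2) z.1 :=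
  measurable_schrod d (τ := fun z : V × ℝ ↦ t - z.2) (φ := fun z ↦ F z.2) (by fun_prop)
    (hF.comp (by fun_prop : Measurable fun z : (V × ℝ) × V ↦ (z.1.2, z.2))) measurable_fst

lemma measurable_integral_schrod_sub (hF : Measurable (Function.uncurry F)) :
    Measurable fun x ↦ ∫ s in I, schrod d (t - s) (F s) x :=
  (measurable_schrod_sub hF).stronglyMeasurable.integral_prod_right'.measurable

lemma eLpNorm_integral_schrod_sub_le_of_integrable (hδ : 0 < δ) (hI : MeasurableSet I)
    (hIδ : ∀ s ∈ I, δ ≤ |t - s|) (hr : r.HolderConjugate r') (hq : q.HolderConjugate q')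
    (h : ∀ g : V → ℂ, Measurable g → Integrable g →
      mixedNorm volume I (ENNReal.ofReal r) (ENNReal.ofReal q) (fun s ↦ schrod d (t - s) g) ≤
        Q * eLpNorm g (ENNReal.ofReal r') volume)
    (hF : Measurable (Function.uncurry F))
    (hFi : Integrable (Function.uncurry F) ((volume.restrict I).prod volume)) :
    eLpNorm (fun x ↦ ∫ s in I, schrod d (t - s) (F s) x) (ENNReal.ofReal r) volume ≤
      Q * mixedNorm volume I (ENNReal.ofReal r') (ENNReal.ofReal q') F := by
  refine eLpNorm_le_of_enorm_integral_mul_le (measurable_integral_schrod_sub hF) hr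
    fun g hg hgi ↦ ?_
  rw [integral_mul_integral_schrod d hδ (τ := (t - ·)) (by fun_prop)
    ((ae_restrict_mem hI).mono hIδ) hFi hgi]
  have hw : Measurable (Function.uncurry fun s ↦ schrod d (t - s) g) :=
    measurable_schrod d (τ := fun z : ℝ × V ↦ t - z.1) (φ := fun _ ↦ g) (by fun_prop)
      (hg.comp measurable_snd) measurable_snd
  calc _ ≤ mixedNorm volume I (ENNReal.ofReal r') (ENNReal.ofReal q') F *
        mixedNorm volume I (ENNReal.ofReal r) (ENNReal.ofReal q) fun s ↦ schrod d (t - s) g :=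
        enorm_integral_mul_le_mixedNorm_mul_mixedNorm hF hw hr.symm hq.symm
    _ ≤ mixedNorm volume I (ENNReal.ofReal r') (ENNReal.ofReal q') F *
        (Q * eLpNorm g (ENNReal.ofReal r') volume) := by gcongr; exact h g hg hgi
    _ = _ := by ring

lemma schrod_of_lintegral_enorm_eq_top {τ : ℝ} (hτ : τ ≠ 0) {f : V → ℂ} (hf : ∫⁻ y, ‖f y‖ₑ = ∞) :
    schrod d τ f = 0 := by
  ext x
  rw [schrod_apply d hτ]
  refine integral_undef fun hint ↦ ?_
  have hlt := hint.hasFiniteIntegral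
  have hc : 0 < (4 * π * |τ|) ^ (-(d : ℝ) / 2) := by have := abs_pos.mpr hτ; positivity
  simp only [hasFiniteIntegral_iff_enorm, enorm_mul, ← ofReal_norm (schrodKernel d τ x _),
    norm_schrodKernel d hτ] at hlt
  rw [lintegral_const_mul' _ _ ENNReal.ofReal_ne_top, hf,
    ENNReal.mul_top (ENNReal.ofReal_pos.mpr hc).ne'] at hlt
  exact hlt.false

/-- The times in `I` at which `F` has spatial `L¹` norm at most `n`. -/
def boundedTimes (I : Set ℝ) (F : ℝ → V → ℂ) (n : ℕ) : Set ℝ := I ∩ {s | ∫⁻ y, ‖F s y‖ₑ ≤ n}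

lemma measurableSet_boundedTimes (hI : MeasurableSet I) (hF : Measurable (Function.uncurry F))
    (n : ℕ) : MeasurableSet (boundedTimes I F n) :=
  hI.inter (measurableSet_le hF.enorm.lintegral_prod_right' measurable_const)

lemma integrable_boundedTimes (hI : MeasurableSet I) (hI_fin : volume I ≠ ∞)
    (hF : Measurable (Function.uncurry F)) (n : ℕ) :
    Integrable (Function.uncurry F) ((volume.restrict (boundedTimes I F n)).prod volume) := by
  refine ⟨hF.aestronglyMeasurable, ?_⟩
  rw [hasFiniteIntegral_iff_enorm, lintegral_prod _ hF.enorm.aemeasurable]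
  calc _ ≤ ∫⁻ _ in boundedTimes I F n, (n : ℝ≥0∞) :=
        setLIntegral_mono' (measurableSet_boundedTimes hI hF n) fun s hs ↦ hs.2
    _ = n * volume (boundedTimes I F n) := setLIntegral_const _ _
    _ < ∞ := ENNReal.mul_lt_top (by simp) ((measure_mono inter_subset_left).trans_lt hI_fin.lt_top)

lemma tendsto_setIntegral_boundedTimes (hI : MeasurableSet I) (hIt : ∀ s ∈ I, t - s ≠ 0)
    (hF : Measurable (Function.uncurry F)) {x : V}
    (hx : IntegrableOn (fun s ↦ schrod d (t - s) (F s) x) I) :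
    Filter.Tendsto (fun n ↦ ∫ s in boundedTimes I F n, schrod d (t - s) (F s) x) Filter.atTop
      (nhds (∫ s in I, schrod d (t - s) (F s) x)) := by
  have hsub : ⋃ n, boundedTimes I F n ⊆ I := iUnion_subset fun n ↦ inter_subset_left
  have hvanish : ∀ s ∈ I \ ⋃ n, boundedTimes I F n, schrod d (t - s) (F s) x = 0 := by
    rintro s ⟨hs, hs'⟩
    refine congrFun (schrod_of_lintegral_enorm_eq_top (hIt s hs) ?_) x
    by_contra hfin
    obtain ⟨n, hn⟩ := ENNReal.exists_nat_gt hfin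
    exact hs' (mem_iUnion.mpr ⟨n, hs, hn.le⟩)
  rw [setIntegral_eq_of_subset_of_forall_sdiff_eq_zero hI hsub hvanish]
  exact tendsto_setIntegral_of_monotone (measurableSet_boundedTimes hI hF)
    (fun m n hmn s hs ↦ ⟨hs.1, (show _ ≤ (m : ℝ≥0∞) from hs.2).trans (mod_cast hmn)⟩)
    (hx.mono_set hsub)

/-- The dual form of a homogeneous estimate `L^{r'} → L^r_t L^q_x`. The Duhamel integral of a
forcing term that is not integrable in space-time is the limit of those over `boundedTimes`,
except at points where it takes the junk value `0` of a divergent integral. -/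
lemma eLpNorm_integral_schrod_sub_le (hδ : 0 < δ) (hI : MeasurableSet I) (hI_fin : volume I ≠ ∞)
    (hIδ : ∀ s ∈ I, δ ≤ |t - s|) (hr : r.HolderConjugate r') (hq : q.HolderConjugate q')
    (h : ∀ g : V → ℂ, Measurable g → Integrable g →
      mixedNorm volume I (ENNReal.ofReal r) (ENNReal.ofReal q) (fun s ↦ schrod d (t - s) g) ≤
        Q * eLpNorm g (ENNReal.ofReal r') volume)
    (hF : Measurable (Function.uncurry F)) :
    eLpNorm (fun x ↦ ∫ s in I, schrod d (t - s) (F s) x) (ENNReal.ofReal r) volume ≤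
      Q * mixedNorm volume I (ENNReal.ofReal r') (ENNReal.ofReal q') F := by
  let T (n : ℕ) (x : V) : ℂ := ∫ s in boundedTimes I F n, schrod d (t - s) (F s) x
  let N : Set V := {x | IntegrableOn (fun s ↦ schrod d (t - s) (F s) x) I}
  have hN : MeasurableSet N :=
    measurableSet_integrable (measurable_schrod_sub hF).stronglyMeasurable
  have hsub (n : ℕ) : boundedTimes I F n ⊆ I := inter_subset_left
  have hT (n : ℕ) : eLpNorm (T n) (ENNReal.ofReal r) volume ≤
      Q * mixedNorm volume I (ENNReal.ofReal r') (ENNReal.ofReal q') F := by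
    refine (eLpNorm_integral_schrod_sub_le_of_integrable hδ (measurableSet_boundedTimes hI hF n)
      (fun s hs ↦ hIδ s (hsub n hs)) hr hq (fun g hg hgi ↦
        (mixedNorm_ofReal_mono hr.nonneg _ (hsub n)).trans (h g hg hgi)) hF
      (integrable_boundedTimes hI hI_fin hF n)).trans ?_
    gcongr
    exact mixedNorm_ofReal_mono hr.symm.nonneg _ (hsub n)
  refine Lp.eLpNorm_le_of_ae_tendsto (u := Filter.atTop) (f := fun n ↦ N.indicator (T n))
    (.of_forall fun n ↦ (eLpNorm_indicator_le _).trans (hT n))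
    (fun n ↦ ((measurable_integral_schrod_sub hF).indicator hN).aestronglyMeasurable)
    (.of_forall fun x ↦ ?_)
  by_cases hx : x ∈ N
  · simp only [indicator_of_mem hx]
    exact tendsto_setIntegral_boundedTimes hI
      (fun s hs ↦ abs_pos.mp (hδ.trans_le (hIδ s hs))) hF hx
  · simp only [indicator_of_notMem hx, integral_undef hx]
    exact tendsto_const_nhds

end Duhamel

section Nonlinearity

variable {α : Type*} [MeasurableSpace α] {μ : Measure α} {I : Set ℝ} {u : ℝ → α → ℂ}

lemma enorm_nonlin {E : Type*} {a : ℝ} (ha : 0 ≤ a) (f : E → ℂ) (x : E) :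
    ‖nonlin a f x‖ₑ = ‖f x‖ₑ ^ (a + 1) := by
  rw [nonlin, enorm_mul, ← ofReal_norm ((‖f x‖ ^ a : ℝ) : ℂ), Complex.norm_real,
    Real.norm_of_nonneg (by positivity), ← ENNReal.ofReal_rpow_of_nonneg (norm_nonneg _) ha,
    ofReal_norm, ENNReal.rpow_add_of_nonneg _ _ ha zero_le_one, ENNReal.rpow_one]

lemma measurable_uncurry_nonlin (a : ℝ) (hu : Measurable (Function.uncurry u)) :
    Measurable (Function.uncurry fun s ↦ nonlin a (u s)) :=
  (Complex.measurable_ofReal.comp (hu.norm.pow_const a)).mul hu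

lemma eLpNorm_nonlin_le {f : α → ℂ} (hf : Measurable f) {a p₀ p₁ q θ₀ θ₁ : ℝ} (ha : 0 ≤ a)
    (hp₀ : 0 < p₀) (hp₁ : 0 < p₁) (hq : 0 < q) (hθ₀ : 0 ≤ θ₀) (hθ₁ : 0 ≤ θ₁)
    (hθ : θ₀ + θ₁ = a + 1) (hpq : θ₀ / p₀ + θ₁ / p₁ = 1 / q) :
    eLpNorm (nonlin a f) (ENNReal.ofReal q) μ ≤
      eLpNorm f (ENNReal.ofReal p₀) μ ^ θ₀ * eLpNorm f (ENNReal.ofReal p₁) μ ^ θ₁ := by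
  have heq {p : ℝ} (hp : 0 < p) (g : α → ℂ) :
      eLpNorm g (ENNReal.ofReal p) μ = (∫⁻ x, ‖g x‖ₑ ^ p ∂μ) ^ (1 / p) := by
    rw [eLpNorm_eq_lintegral_rpow_enorm_toReal (ENNReal.ofReal_pos.mpr hp).ne'
      ENNReal.ofReal_ne_top, ENNReal.toReal_ofReal hp.le]
  have hweights : θ₀ * q / p₀ + θ₁ * q / p₁ = 1 := by
    rw [mul_div_right_comm, mul_div_right_comm, ← add_mul, hpq, one_div_mul_cancel hq.ne']
  rw [heq hq, heq hp₀, heq hp₁]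
  calc _ = (∫⁻ x, (‖f x‖ₑ ^ p₀) ^ (θ₀ * q / p₀) * (‖f x‖ₑ ^ p₁) ^ (θ₁ * q / p₁) ∂μ) ^ (1 / q) := by
        congr 1
        refine lintegral_congr fun x ↦ ?_
        rw [enorm_nonlin ha, ← hθ, ← ENNReal.rpow_mul, ← ENNReal.rpow_mul, ← ENNReal.rpow_mul,
          mul_div_cancel₀ _ hp₀.ne', mul_div_cancel₀ _ hp₁.ne', add_mul,
          ENNReal.rpow_add_of_nonneg _ _ (by positivity) (by positivity)]
    _ ≤ ((∫⁻ x, ‖f x‖ₑ ^ p₀ ∂μ) ^ (θ₀ * q / p₀) * (∫⁻ x, ‖f x‖ₑ ^ p₁ ∂μ) ^ (θ₁ * q / p₁)) ^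
          (1 / q) := by
        gcongr
        exact ENNReal.lintegral_mul_norm_pow_le (hf.enorm.pow_const _).aemeasurable
          (hf.enorm.pow_const _).aemeasurable (by positivity) (by positivity) hweights
    _ = _ := by
        rw [ENNReal.mul_rpow_of_nonneg _ _ (by positivity)]
        simp only [← ENNReal.rpow_mul]
        congr 2 <;> field_simp

lemma ae_eLpNorm_nonlin_le (hI : MeasurableSet I) (hI0 : ∀ s ∈ I, 0 < s)
    (hu : Measurable (Function.uncurry u)) {a r q θ₀ θ₁ κ : ℝ} (ha : 0 ≤ a) (hr : 0 < r)
    (hq : 0 < q) (hθ₀ : 0 ≤ θ₀) (hθ₁ : 0 ≤ θ₁) (hθ : θ₀ + θ₁ = a + 1)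
    (hrq : θ₀ / 2 + θ₁ / r = 1 / q) :
    ∀ᵐ s ∂volume.restrict I, eLpNorm (nonlin a (u s)) (ENNReal.ofReal q) μ ≤
      mixedNorm μ I ∞ 2 u ^ θ₀ *
        (⨆ s ∈ I, ENNReal.ofReal (s ^ κ) * eLpNorm (u s) (ENNReal.ofReal r) μ) ^ θ₁ *
        ENNReal.ofReal (s ^ (-(κ * θ₁))) := by
  rw [mixedNorm_top]
  filter_upwards [ae_restrict_mem hI, ENNReal.ae_le_essSup fun s ↦ eLpNorm (u s) 2 μ] with s hs hs₂
  have hs0 := hI0 s hs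
  have hdecay : eLpNorm (u s) (ENNReal.ofReal r) μ ≤
      (⨆ s ∈ I, ENNReal.ofReal (s ^ κ) * eLpNorm (u s) (ENNReal.ofReal r) μ) *
        ENNReal.ofReal (s ^ (-κ)) := by
    refine le_trans (le_of_eq ?_) (mul_le_mul_left (le_iSup₂ (f := fun s (_ : s ∈ I) ↦
      ENNReal.ofReal (s ^ κ) * eLpNorm (u s) (ENNReal.ofReal r) μ) s hs) _)
    rw [mul_right_comm, ← ENNReal.ofReal_mul (by positivity), ← Real.rpow_add hs0, add_neg_cancel,
      Real.rpow_zero, ENNReal.ofReal_one, one_mul]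
  refine (eLpNorm_nonlin_le hu.of_uncurry_left ha two_pos hr hq hθ₀ hθ₁ hθ hrq).trans ?_
  rw [ENNReal.ofReal_ofNat, mul_assoc, ← neg_mul, Real.rpow_mul hs0.le,
    ← ENNReal.ofReal_rpow_of_nonneg (by positivity) hθ₁, ← ENNReal.mul_rpow_of_nonneg _ _ hθ₁]
  gcongr

lemma mixedNorm_le_of_ae_le_mul_rpow {A p γ : ℝ} (hA : 0 < A) (hIA : I ⊆ Ici A) (hp : 0 < p)
    (hγ : 1 < γ * p) {q K : ℝ≥0∞}
    (hu : ∀ᵐ s ∂volume.restrict I, eLpNorm (u s) q μ ≤ K * ENNReal.ofReal (s ^ (-γ))) :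
    mixedNorm μ I (ENNReal.ofReal p) q u ≤
      ENNReal.ofReal ((γ * p - 1) ^ (-(1 / p)) * A ^ (1 / p - γ)) * K := by
  have hγ' : 0 < γ * p - 1 := by linarith
  rw [mixedNorm_ofReal hp.le, one_div, ENNReal.rpow_inv_le_iff hp]
  calc _ ≤ ∫⁻ s in I, K ^ p * ENNReal.ofReal (s ^ (-γ)) ^ p := by
        refine lintegral_mono_ae (hu.mono fun s hs ↦ ?_)
        rw [← ENNReal.mul_rpow_of_nonneg _ _ hp.le]
        gcongr
    _ ≤ ∫⁻ s in Ici A, K ^ p * ENNReal.ofReal (s ^ (-γ)) ^ p := lintegral_mono_set hIA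
    _ = ∫⁻ s in Ioi A, K ^ p * ENNReal.ofReal (s ^ (-(γ * p))) := by
        rw [setLIntegral_congr Ioi_ae_eq_Ici.symm]
        refine setLIntegral_congr_fun measurableSet_Ioi fun s hs ↦ ?_
        have hs0 : 0 < s := hA.trans hs
        rw [ENNReal.ofReal_rpow_of_nonneg (by positivity) hp.le, ← Real.rpow_mul hs0.le, neg_mul]
    _ = ENNReal.ofReal (A ^ (1 - γ * p) / (γ * p - 1)) * K ^ p := by
        rw [lintegral_const_mul _ (by fun_prop), lintegral_Ioi_rpow (by linarith) hA, mul_comm]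
        ring_nf
    _ = _ := by
        rw [ENNReal.mul_rpow_of_nonneg _ _ hp.le, ENNReal.ofReal_rpow_of_nonneg (by positivity)
          hp.le, Real.mul_rpow (by positivity) (by positivity), ← Real.rpow_mul hγ'.le,
          ← Real.rpow_mul hA.le, div_eq_inv_mul, neg_mul, inv_mul_cancel₀ hp.ne', sub_mul,
          inv_mul_cancel₀ hp.ne', Real.rpow_neg_one]

end Nonlinearity

section Interpolation

variable {V : Type*} [NormedAddCommGroup V] [InnerProductSpace ℝ V] [FiniteDimensional ℝ V]
  [MeasurableSpace V] [BorelSpace V] {d : ℕ}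

lemma exists_eLpNorm_duhamel_le (hV : Module.finrank ℝ V = d) (hd : 3 ≤ d) {r : ℝ} (hr : 2 < r) :
    ∃ C : ℝ, 0 < C ∧ ∀ t : ℝ, 0 < t → ∀ I : Set ℝ, MeasurableSet I → I ⊆ Icc 0 (t / 2) →
      ∀ F : ℝ → V → ℂ, Measurable (Function.uncurry F) →
        eLpNorm (fun x ↦ ∫ s in I, schrod d (t - s) (F s) x) (ENNReal.ofReal r) volume ≤
          ENNReal.ofReal (C * t ^ (-(d * (1 / 2 - 1 / r)))) *
            mixedNorm volume I (ENNReal.ofReal (r / (r - 1)))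
              (ENNReal.ofReal (d * r / (d * r - d + 2))) F := by
  obtain ⟨C, hC, hbound⟩ := exists_mixedNorm_schrod_sub_le hV hd hr
  have hd3 : (3 : ℝ) ≤ d := mod_cast hd
  have hd2 : 0 < (d : ℝ) - 2 := by linarith
  have hdr : 0 < d * r - d + 2 := by nlinarith
  have hconj : r.HolderConjugate (r / (r - 1)) := .conjExponent (by linarith)
  have hconj' : ((d : ℝ) / (d - 2) * r).HolderConjugate (d * r / (d * r - d + 2)) := by
    refine Real.holderConjugate_iff.mpr ⟨?_, by field_simp; ring⟩
    rw [div_mul_eq_mul_div, lt_div_iff₀ hd2]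
    nlinarith
  refine ⟨C * (1 / 2) ^ (-(d * (1 / 2 - 1 / r))), by positivity, fun t ht I hI hIt F hF ↦ ?_⟩
  have hI_fin : volume I ≠ ∞ := ((measure_mono hIt).trans_lt measure_Icc_lt_top).ne
  have hIδ (s : ℝ) (hs : s ∈ I) : 1 / 2 * t ≤ |t - s| := by
    rw [abs_of_nonneg (by linarith [(hIt hs).2])]
    linarith [(hIt hs).2]
  rw [mul_assoc, ← Real.mul_rpow (by norm_num) ht.le]
  exact eLpNorm_integral_schrod_sub_le (by positivity) hI hI_fin hIδ hconj hconj'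
    (hbound _ (by positivity) t I hI hI_fin hIδ) hF

lemma exists_mixedNorm_nonlin_le {α : Type*} [MeasurableSpace α] {μ : Measure α} (hd : 3 ≤ d)
    {r : ℝ} (hr : 2 + 2 / d ≤ r) (hr' : r < 2 * (d - 1) / (d - 2)) :
    ∃ C : ℝ, 0 < C ∧ ∀ A : ℝ, 0 < A → ∀ I : Set ℝ, MeasurableSet I → I ⊆ Ici A →
      ∀ u : ℝ → α → ℂ, Measurable (Function.uncurry u) →
        mixedNorm μ I (ENNReal.ofReal (r / (r - 1))) (ENNReal.ofReal (d * r / (d * r - d + 2)))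
            (fun s ↦ nonlin (4 / d) (u s)) ≤
          ENNReal.ofReal (C * A ^ (-((2 * (d - 1) - (d - 2) * r) / (2 * r)))) *
            (mixedNorm μ I ∞ 2 u ^ (2 * (d * r - 2 * d - 2) / (d * (r - 2))) *
              (⨆ s ∈ I, ENNReal.ofReal (s ^ (d * (1 / 2 - 1 / r))) *
                eLpNorm (u s) (ENNReal.ofReal r) μ) ^
                  (((4 - d) * r + 2 * (d - 2)) / (d * (r - 2)))) := by
  have hd3 : (3 : ℝ) ≤ d := mod_cast hd
  have hd2 : 0 < (d : ℝ) - 2 := by linarith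
  have hdr_lower : 2 * d + 2 ≤ d * r := by
    calc (2 * d + 2 : ℝ) = d * (2 + 2 / d) := by field_simp
      _ ≤ d * r := by gcongr
  have hdr_upper : r * (d - 2) < 2 * (d - 1) := (lt_div_iff₀ hd2).mp hr'
  have hr2 : 0 < r - 2 := by nlinarith
  have hr1 : 0 < r - 1 := by linarith
  have hr0 : 0 < r := by linarith
  have hdr : 0 < d * r - d + 2 := by linarith
  have hθ₀ : 0 ≤ d * r - 2 * d - 2 := by linarith
  have hθ₁ : 0 ≤ (4 - d) * r + 2 * (d - 2) := by linarith
  set θ := ((4 - d) * r + 2 * (d - 2)) / (d * (r - 2)) with hθ_def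
  set γ := d * (1 / 2 - 1 / r) * θ with hγ_def
  have hγ_eq : γ * (r / (r - 1)) - 1 = (2 * (d - 1) - r * (d - 2)) / (2 * (r - 1)) := by
    rw [hγ_def, hθ_def]
    field_simp
    ring
  -- The forcing decays like `s ^ (-γ)`: this is its integrability at infinity to the power `r'`.
  have hγ_pos : 0 < γ * (r / (r - 1)) - 1 := by
    rw [hγ_eq]
    exact div_pos (by linarith) (by linarith)
  refine ⟨(γ * (r / (r - 1)) - 1) ^ (-(1 / (r / (r - 1)))), by positivity,
    fun A hA I hI hIA u hu ↦ ?_⟩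
  have hA_exp : -((2 * (d - 1) - (d - 2) * r) / (2 * r)) = 1 / (r / (r - 1)) - γ := by
    rw [hγ_def, hθ_def]
    field_simp
    ring
  rw [hA_exp]
  refine mixedNorm_le_of_ae_le_mul_rpow hA hIA (by positivity) (by linarith)
    (ae_eLpNorm_nonlin_le hI (fun s hs ↦ hA.trans_le (hIA hs)) hu (by positivity) (by linarith)
      (by positivity) (by positivity) (by positivity) ?_ ?_)
  · rw [hθ_def]
    field_simp
    ring
  · rw [hθ_def]
    field_simp
    ring

theorem interpolation_case2_3d_general (hV : Module.finrank ℝ V = d) (hd : 3 ≤ d) {r : ℝ}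
    (hr : 2 + 2 / d ≤ r) (hr' : r < 2 * (d - 1) / (d - 2)) :
    ∃ C : ℝ, 0 < C ∧ ∀ t : ℝ, 0 < t → ∀ A : ℝ, 0 < A →
      ∀ I : Set ℝ, MeasurableSet I → I ⊆ Icc A (t / 2) →
        ∀ u : ℝ → V → ℂ, Measurable (Function.uncurry u) →
          eLpNorm (fun x ↦ ∫ s in I, schrod d (t - s) (nonlin (4 / d) (u s)) x)
              (ENNReal.ofReal r) volume ≤
            ENNReal.ofReal (C * t ^ (-(d * (1 / 2 - 1 / r))) *
                A ^ (-((2 * (d - 1) - (d - 2) * r) / (2 * r)))) *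
              mixedNorm volume I ∞ 2 u ^ (2 * (d * r - 2 * d - 2) / (d * (r - 2))) *
              (⨆ s ∈ I, ENNReal.ofReal (s ^ (d * (1 / 2 - 1 / r))) *
                eLpNorm (u s) (ENNReal.ofReal r) volume) ^
                  (((4 - d) * r + 2 * (d - 2)) / (d * (r - 2))) := by
  have hd0 : (0 : ℝ) < 2 / d := by positivity
  obtain ⟨C₁, hC₁, hduhamel⟩ := exists_eLpNorm_duhamel_le hV hd (show 2 < r by linarith)
  obtain ⟨C₂, hC₂, hnonlin⟩ := exists_mixedNorm_nonlin_le (μ := (volume : Measure V)) hd hr hr'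
  refine ⟨C₁ * C₂, by positivity, fun t ht A hA I hI hIt u hu ↦ ?_⟩
  refine (hduhamel t ht I hI (hIt.trans (Icc_subset_Icc_left hA.le)) _
    (measurable_uncurry_nonlin _ hu)).trans ?_
  grw [hnonlin A hA I hI (fun s hs ↦ (hIt hs).1) u hu]
  rw [← mul_assoc, ← mul_assoc, ← ENNReal.ofReal_mul (by positivity), mul_mul_mul_comm,
    ← mul_assoc (C₁ * C₂)]

end Interpolation

/-- **Three-dimensional interpolation estimate (Case 2 of the third Duhamel term).**
Fix `8/3 ≤ r < 4`.  For any `t > 0`, `A > 0`, any measurable interval `I ⊆ [A, t/2]`, and any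
measurable `u` on `I × ℝ³`,
`‖∫_I e^{i(t-s)Δ}(|u|^{4/3}u)(s) ds‖_{L^r_x} ≤ C t^{-3(1/2-1/r)} A^{-(4-r)/(2r)}
  ‖u‖_{L^∞_s L²_x(I×ℝ³)}^{2(3r-8)/(3(r-2))}
  (sup_{s∈I} s^{3(1/2-1/r)} ‖u(s)‖_{L^r_x})^{(r+2)/(3(r-2))}`, with `C = C(r)`. -/
theorem interpolation_case2_3d (r : ℝ) (hr : 8 / 3 ≤ r) (hr4 : r < 4) :
    ∃ C : ℝ, 0 < C ∧
      ∀ t : ℝ, 0 < t → ∀ A : ℝ, 0 < A →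
        ∀ I : Set ℝ, MeasurableSet I → I.OrdConnected → I ⊆ Set.Icc A (t / 2) →
          ∀ u : ℝ → EuclideanSpace ℝ (Fin 3) → ℂ, Measurable (Function.uncurry u) →
            eLpNorm (fun x => ∫ s in I, schrod 3 (t - s) (nonlin (4 / 3) (u s)) x)
                (ENNReal.ofReal r) volume ≤
              ENNReal.ofReal (C * t ^ (-(3 * (1 / 2 - 1 / r))) * A ^ (-((4 - r) / (2 * r)))) *
                mixedNorm volume I ∞ 2 u ^ (2 * (3 * r - 8) / (3 * (r - 2))) *
                (⨆ s ∈ I, ENNReal.ofReal (s ^ (3 * (1 / 2 - 1 / r))) *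
                    eLpNorm (u s) (ENNReal.ofReal r) volume) ^ ((r + 2) / (3 * (r - 2))) := by
  obtain ⟨C, hC, h⟩ := interpolation_case2_3d_general (V := EuclideanSpace ℝ (Fin 3))
    finrank_euclideanSpace_fin le_rfl (r := r) (by norm_num; linarith) (by norm_num; linarith)
  refine ⟨C, hC, fun t ht A hA I hI _ hIt u hu ↦ ?_⟩
  convert h t ht A hA I hI hIt u hu using 4 <;> push_cast <;> ring_nf
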